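/- Under Conditions (A)–(D) with b_j ≠ 0 for all j ≥ 1, for every V ∈ C(𝒜) the limit Q(V) = lim_{k→∞} k⁻¹ log 𝔼_u exp(Σ_{n=1}^k V(u_n)) exists uniformly with respect to the deterministic initial condition u ∈ 𝒜 and does not depend on u; moreover the resulting functional Q : C(𝒜) → ℝ is convex, satisfies |Q(V₁) − Q(V₂)| ≤ ‖V₁ − V₂‖_∞ for all V₁, V₂ ∈ C(𝒜), and Q(C) = C for every constant C ∈ ℝ. -/

import Mathlib

open MeasureTheory ProbabilityTheory Filter Topology BoundedContinuousFunction
open scoped ENNReal NNReal Pointwise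

noncomputable section

/-- The sets `𝒜_k(B)`: `𝒜_0(B) = B`, `𝒜_k(B) = S(𝒜_{k-1}(B)) + 𝒦`. -/
def attain {H : Type*} [AddCommGroup H] (S : H → H) (K : Set H) (B : Set H) : ℕ → Set H
  | 0 => B
  | n + 1 => S '' attain S K B n + K

/-- The domain of attainability `𝒜(B)` from `B`: the closure of `⋃_k 𝒜_k(B)`. -/
def attainDom {H : Type*} [AddCommGroup H] [TopologicalSpace H]
    (S : H → H) (K : Set H) (B : Set H) : Set H :=
  closure (⋃ n, attain S K B n)

variable {H : Type} [NormedAddCommGroup H] [InnerProductSpace ℝ H] [CompleteSpace H]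

/-- The orthogonal projection `𝖯_N` onto the span of the first `N` vectors of an orthonormal
basis. -/
def projB (e : HilbertBasis ℕ ℝ H) (N : ℕ) (u : H) : H :=
  ∑ j ∈ Finset.range N, e.repr u j • (e j : H)

/-- Condition (A): regularity and stability. -/
def CondA (S : H → H) : Prop :=
  ContDiff ℝ 1 S ∧
  ∀ R r : ℝ, 0 < r → r < R →
    ∃ C : ℝ, 0 < C ∧ ∃ a : ℝ, 0 < a ∧ a < 1 ∧ ∃ n₀ : ℕ, 1 ≤ n₀ ∧
      (∀ u₁ ∈ Metric.closedBall (0 : H) R, ∀ u₂ ∈ Metric.closedBall (0 : H) R,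
          ‖S u₁ - S u₂‖ ≤ C * ‖u₁ - u₂‖) ∧
      ∀ u ∈ Metric.closedBall (0 : H) R, ∀ n : ℕ, n₀ ≤ n →
          ‖S^[n] u‖ ≤ max (a * ‖u‖) r

/-- Condition (B): dissipativity. -/
def CondB (S : H → H) (K : Set H) : Prop :=
  ∃ ρ : ℝ, 0 < ρ ∧ ∃ k₀ : ℝ → ℕ, Monotone k₀ ∧
    ∀ R : ℝ, 0 ≤ R → ∀ k : ℕ, k₀ R ≤ k →
      attain S K (Metric.closedBall 0 R) k ⊆ Metric.closedBall (0 : H) ρ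

/-- Condition (C): squeezing. -/
def CondC (S : H → H) (e : HilbertBasis ℕ ℝ H) : Prop :=
  ∀ R : ℝ, 0 < R → ∃ γ : ℕ → ℝ, (∀ N, 0 < γ N) ∧ Antitone γ ∧
    Tendsto γ atTop (𝓝 0) ∧
    ∀ N : ℕ, ∀ u₁ ∈ Metric.closedBall (0 : H) R, ∀ u₂ ∈ Metric.closedBall (0 : H) R,
      ‖(S u₁ - S u₂) - projB e N (S u₁ - S u₂)‖ ≤ γ N * ‖u₁ - u₂‖

/-- Condition (D): structure of the noise, `η_k = ∑_j b_j ξ_{jk} e_j` with `∑ b_j² < ∞`,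
independent scalar `ξ_{jk}` whose laws have Lipschitz densities `p_j` with `p_j(0) > 0` and
support in `[-1,1]`. -/
def CondD [MeasurableSpace H] {Ω : Type*} [MeasurableSpace Ω] (P : Measure Ω)
    (e : HilbertBasis ℕ ℝ H) (η : ℕ → Ω → H)
    (b : ℕ → ℝ) (ξ : ℕ → ℕ → Ω → ℝ) (p : ℕ → ℝ → ℝ) : Prop :=
  (∀ j, 0 ≤ b j) ∧ Summable (fun j => (b j) ^ 2) ∧
  (∀ k ω, HasSum (fun j => (b j * ξ j k ω) • (e j : H)) (η k ω)) ∧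
  (∀ j k, Measurable (ξ j k)) ∧
  iIndepFun (fun jk : ℕ × ℕ => ξ jk.1 jk.2) P ∧
  (∀ j k, Measure.map (ξ j k) P
      = (volume : Measure ℝ).withDensity fun x => ENNReal.ofReal (p j x)) ∧
  (∀ j, ∃ L : ℝ≥0, LipschitzWith L (p j)) ∧
  (∀ j, 0 < p j 0) ∧
  (∀ j, Function.support (p j) ⊆ Set.Icc (-1 : ℝ) 1)

/-- The trajectory `u_k = S(u_{k-1}) + η_k` of the random dynamical system issued from `u₀`. -/
def traj {Ω : Type*} (S : H → H) (η : ℕ → Ω → H) (u₀ : Ω → H) : ℕ → Ω → H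
  | 0 => u₀
  | k + 1 => fun ω => S (traj S η u₀ k ω) + η (k + 1) ω

/-- The (topological) support of a measure. -/
def msupp {X : Type*} [TopologicalSpace X] [MeasurableSpace X] (μ : Measure X) : Set X :=
  {x | ∀ U ∈ 𝓝 x, 0 < μ U}

/-- The occupation measures `ζ_k = k⁻¹ ∑_{n=0}^{k-1} δ_{x_n}` of a sequence. -/
def occ {X : Type*} [MeasurableSpace X] (x : ℕ → X) (k : ℕ) : ProbabilityMeasure X :=
  if hk : k = 0 then ⟨Measure.dirac (x 0), Measure.dirac.isProbabilityMeasure⟩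
  else
    ⟨(k : ℝ≥0∞)⁻¹ • ∑ n ∈ Finset.range k, Measure.dirac (x n), by
      refine ⟨?_⟩
      simp only [Measure.smul_apply, Measure.finset_sum_apply, measure_univ,
        Finset.sum_const, Finset.card_range, nsmul_eq_mul, mul_one, smul_eq_mul]
      exact ENNReal.inv_mul_cancel (Nat.cast_ne_zero.mpr hk) (ENNReal.natCast_ne_top k)⟩

/-- Large deviation principle for the sequence of events `prob k` (the laws of random
probability measures in `Z`), with rate function `I`. -/
def LDPof {Z : Type*} [TopologicalSpace Z] (prob : ℕ → Set Z → ℝ≥0∞) (I : Z → ℝ≥0∞) : Prop :=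
  (∀ F : Set Z, IsClosed F →
    Filter.limsup (fun k : ℕ => (((k : ℝ)⁻¹ : ℝ) : EReal) * ENNReal.log (prob k F)) atTop
      ≤ -(⨅ σ ∈ F, (I σ : EReal))) ∧
  (∀ G : Set Z, IsOpen G →
    -(⨅ σ ∈ G, (I σ : EReal))
      ≤ Filter.liminf (fun k : ℕ => (((k : ℝ)⁻¹ : ℝ) : EReal) * ENNReal.log (prob k G)) atTop)

/-- A good rate function: lower semicontinuous with compact level sets. -/
def GoodRate {Z : Type*} [TopologicalSpace Z] (I : Z → ℝ≥0∞) : Prop :=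
  LowerSemicontinuous I ∧ ∀ c : ℝ≥0∞, c ≠ ⊤ → IsCompact {σ : Z | I σ ≤ c}

set_option linter.unusedSectionVars false
set_option linter.unusedVariables false
set_option linter.style.longLine false

/-- The weighted transfer operator. -/
def TT [MeasurableSpace H] (μ : Measure H) (S : H → H) (w : H → ℝ≥0∞) (f : H → ℝ≥0∞) (u : H) :
    ℝ≥0∞ :=
  ∫⁻ x, w (S u + x) * f (S u + x) ∂μ

theorem TT_meas [SecondCountableTopology H] [MeasurableSpace H] [BorelSpace H]
    {μ : Measure H} [IsProbabilityMeasure μ] {S : H → H} (hS : Measurable S)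
    {w f : H → ℝ≥0∞} (hw : Measurable w) (hf : Measurable f) : Measurable (TT μ S w f) := by
  unfold TT
  have : Measurable (fun z : H × H => w (S z.1 + z.2) * f (S z.1 + z.2)) := by fun_prop
  exact this.lintegral_prod_right'

theorem TT_iter_meas [SecondCountableTopology H] [MeasurableSpace H] [BorelSpace H]
    {μ : Measure H} [IsProbabilityMeasure μ] {S : H → H} (hS : Measurable S)
    {w f : H → ℝ≥0∞} (hw : Measurable w) (hf : Measurable f) (n : ℕ) :
    Measurable ((TT μ S w)^[n] f) := by
  induction n generalizing f with
  | zero => simpa using hf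
  | succ n ih => rw [Function.iterate_succ_apply]; exact ih (TT_meas hS hw hf)

section basic

variable [MeasurableSpace H] {μ : Measure H} [IsProbabilityMeasure μ] {S : H → H}
  {w : H → ℝ≥0∞} {A K : Set H}

theorem ae_mem_of_null (hK : μ Kᶜ = 0) : ∀ᵐ x ∂μ, x ∈ K := by
  rw [ae_iff]; exact hK

/-- monotonicity on the invariant set -/
theorem TT_mono (hK : μ Kᶜ = 0) (hinv : ∀ u ∈ A, ∀ x ∈ K, S u + x ∈ A)
    {f g : H → ℝ≥0∞} (h : ∀ v ∈ A, f v ≤ g v) : ∀ u ∈ A, TT μ S w f u ≤ TT μ S w g u := by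
  intro u hu
  apply lintegral_mono_ae
  filter_upwards [ae_mem_of_null hK] with x hx
  gcongr
  exact h _ (hinv u hu x hx)

theorem TT_iter_mono (hK : μ Kᶜ = 0) (hinv : ∀ u ∈ A, ∀ x ∈ K, S u + x ∈ A)
    (n : ℕ) {f g : H → ℝ≥0∞} (h : ∀ v ∈ A, f v ≤ g v) :
    ∀ u ∈ A, (TT μ S w)^[n] f u ≤ (TT μ S w)^[n] g u := by
  induction n generalizing f g with
  | zero => simpa using h
  | succ n ih => 
    simp only [Function.iterate_succ_apply]
    exact ih (TT_mono hK hinv h)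

theorem TT_smul {c : ℝ≥0∞} (hc : c ≠ ⊤) (f : H → ℝ≥0∞) :
    TT μ S w (fun x => c * f x) = fun x => c * TT μ S w f x := by
  funext u
  unfold TT
  rw [← lintegral_const_mul' _ _ hc]
  congr 1; funext x; ring

theorem TT_iter_smul {c : ℝ≥0∞} (hc : c ≠ ⊤) (n : ℕ) (f : H → ℝ≥0∞) :
    (TT μ S w)^[n] (fun x => c * f x) = fun x => c * (TT μ S w)^[n] f x := by
  induction n generalizing f with
  | zero => rfl
  | succ n ih => simp only [Function.iterate_succ_apply]; rw [TT_smul hc, ih]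

theorem TT_le {E : ℝ≥0∞} (hK : μ Kᶜ = 0) (hinv : ∀ u ∈ A, ∀ x ∈ K, S u + x ∈ A)
    (hw : ∀ x, w x ≤ E) {f : H → ℝ≥0∞} {c : ℝ≥0∞} (h : ∀ v ∈ A, f v ≤ c) :
    ∀ u ∈ A, TT μ S w f u ≤ E * c := by
  intro u hu
  calc TT μ S w f u ≤ ∫⁻ x, E * c ∂μ := by
        apply lintegral_mono_ae
        filter_upwards [ae_mem_of_null hK] with x hx
        gcongr
        · exact hw _
        · exact h _ (hinv u hu x hx)
    _ = E * c := by simp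

theorem TT_ge {E' : ℝ≥0∞} (hK : μ Kᶜ = 0) (hinv : ∀ u ∈ A, ∀ x ∈ K, S u + x ∈ A)
    (hw : ∀ x, E' ≤ w x) {f : H → ℝ≥0∞} {c : ℝ≥0∞} (h : ∀ v ∈ A, c ≤ f v) :
    ∀ u ∈ A, E' * c ≤ TT μ S w f u := by
  intro u hu
  calc E' * c = ∫⁻ x, E' * c ∂μ := by simp
    _ ≤ TT μ S w f u := by
        apply lintegral_mono_ae
        filter_upwards [ae_mem_of_null hK] with x hx
        gcongr
        · exact hw _
        · exact h _ (hinv u hu x hx)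

theorem TT_iter_one_le {E : ℝ≥0∞} (hK : μ Kᶜ = 0) (hinv : ∀ u ∈ A, ∀ x ∈ K, S u + x ∈ A)
    (hw : ∀ x, w x ≤ E) (n : ℕ) : ∀ u ∈ A, (TT μ S w)^[n] (fun _ => 1) u ≤ E ^ n := by
  induction n with
  | zero => simp
  | succ n ih =>
    simp only [Function.iterate_succ_apply', pow_succ']
    exact TT_le hK hinv hw ih

theorem TT_iter_one_ge {E' : ℝ≥0∞} (hK : μ Kᶜ = 0) (hinv : ∀ u ∈ A, ∀ x ∈ K, S u + x ∈ A)
    (hw : ∀ x, E' ≤ w x) (n : ℕ) : ∀ u ∈ A, E' ^ n ≤ (TT μ S w)^[n] (fun _ => 1) u := by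
  induction n with
  | zero => simp
  | succ n ih =>
    simp only [Function.iterate_succ_apply', pow_succ']
    exact TT_ge hK hinv hw ih

/-- `f_{k+n} ≤ c f_k` if `f_n ≤ c`. -/
theorem TT_add_le (hK : μ Kᶜ = 0) (hinv : ∀ u ∈ A, ∀ x ∈ K, S u + x ∈ A)
    (k n : ℕ) {c : ℝ≥0∞} (hc : c ≠ ⊤) (h : ∀ u ∈ A, (TT μ S w)^[n] (fun _ => 1) u ≤ c) :
    ∀ u ∈ A, (TT μ S w)^[k + n] (fun _ => 1) u ≤ c * (TT μ S w)^[k] (fun _ => 1) u := by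
  intro u hu
  rw [Function.iterate_add_apply]
  have := TT_iter_mono (w := w) hK hinv k (f := (TT μ S w)^[n] (fun _ => 1)) (g := fun _ => c * 1)
    (by simpa using h) u hu
  rwa [TT_iter_smul hc] at this

theorem TT_add_ge (hK : μ Kᶜ = 0) (hinv : ∀ u ∈ A, ∀ x ∈ K, S u + x ∈ A)
    (k n : ℕ) {c : ℝ≥0∞} (hc : c ≠ ⊤) (h : ∀ u ∈ A, c ≤ (TT μ S w)^[n] (fun _ => 1) u) :
    ∀ u ∈ A, c * (TT μ S w)^[k] (fun _ => 1) u ≤ (TT μ S w)^[k + n] (fun _ => 1) u := by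
  intro u hu
  rw [Function.iterate_add_apply]
  have := TT_iter_mono (w := w) hK hinv k (g := (TT μ S w)^[n] (fun _ => 1)) (f := fun _ => c * 1)
    (by simpa using h) u hu
  rwa [TT_iter_smul hc] at this

end basic

section feller

variable [SecondCountableTopology H] [MeasurableSpace H] [BorelSpace H]
  {μ : Measure H} [IsProbabilityMeasure μ] {S : H → H}
  {w : H → ℝ≥0∞} {A K : Set H}

/-- One step of the coupling estimate. -/
theorem feller_step (hSm : Measurable S) (hwm : Measurable w) (hK : μ Kᶜ = 0)
    (hKm : MeasurableSet K)
    (hinv : ∀ u ∈ A, ∀ x ∈ K, S u + x ∈ A) {E M q Q C D g : ℝ≥0∞}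
    (hw : ∀ x, w x ≤ E) (hE : E ≠ ⊤) (hM : M ≠ ⊤) (hQ : Q ≠ ⊤) (hq : q ≠ ⊤)
    {f : H → ℝ≥0∞} (hf : Measurable f) (hfM : ∀ v ∈ A, f v ≤ M)
    {u u' h : H} (hu : u ∈ A) (hu' : u' ∈ A)
    (hclose : ∀ v ∈ A, ∀ v' ∈ A, v - v' = (S u - S u') - h →
      w v ≤ q * w v' ∧ f v ≤ Q * f v' + C * g * M)
    (hsh : ∀ c : ℝ≥0∞, c ≠ ⊤ → ∀ Φ : H → ℝ≥0∞, Measurable Φ → (∀ x, Φ x ≤ c) →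
      ∫⁻ x, Φ (x + h) ∂μ ≤ ∫⁻ x, Φ x ∂μ + c * D) :
    TT μ S w f u ≤ q * Q * TT μ S w f u' + E * M * D + q * E * (C * g * M) := by
  classical
  set G2 : H → ℝ≥0∞ := fun y => w (S u' + y) * f (S u' + y) with hG2
  have hG2m : Measurable G2 := by fun_prop
  set Φ : H → ℝ≥0∞ := K.piecewise (fun y => min (E * M) (q * Q * G2 y)) (fun _ => E * M) with hΦ
  have hΦm : Measurable Φ := Measurable.piecewise hKm (by fun_prop) (by fun_prop)
  have hΦle : ∀ x, Φ x ≤ E * M := by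
    intro x
    by_cases hx : x ∈ K
    · rw [hΦ, Set.piecewise_eq_of_mem _ _ _ hx]; exact min_le_left _ _
    · rw [hΦ, Set.piecewise_eq_of_notMem _ _ _ hx]
  have h1 : TT μ S w f u ≤ ∫⁻ x, (Φ (x + h) + q * E * (C * g * M)) ∂μ := by
    apply lintegral_mono_ae
    filter_upwards [ae_mem_of_null hK] with x hx
    have hz : S u + x ∈ A := hinv u hu x hx
    have hEM : w (S u + x) * f (S u + x) ≤ E * M := by
      gcongr
      · exact hw _
      · exact hfM _ hz
    by_cases hxh : x + h ∈ K
    · rw [hΦ, Set.piecewise_eq_of_mem _ _ _ hxh]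
      have hz' : S u' + (x + h) ∈ A := hinv u' hu' _ hxh
      obtain ⟨ha, hb⟩ := hclose _ hz _ hz' (by abel)
      rw [min_add]
      refine le_min (hEM.trans le_self_add) ?_
      calc w (S u + x) * f (S u + x)
          ≤ (q * w (S u' + (x + h))) * (Q * f (S u' + (x + h)) + C * g * M) := by gcongr
        _ = q * Q * G2 (x + h) + q * w (S u' + (x + h)) * (C * g * M) := by
            rw [hG2]; ring
        _ ≤ _ := by
            gcongr
            exact hw _
    · rw [hΦ, Set.piecewise_eq_of_notMem _ _ _ hxh]
      exact hEM.trans le_self_add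
  have h2 : ∫⁻ x, (Φ (x + h) + q * E * (C * g * M)) ∂μ
      = ∫⁻ x, Φ (x + h) ∂μ + q * E * (C * g * M) := by
    rw [lintegral_add_right _ measurable_const]; simp
  have h3 := hsh (E * M) (ENNReal.mul_ne_top hE hM) Φ hΦm hΦle
  have h4 : ∫⁻ x, Φ x ∂μ ≤ q * Q * TT μ S w f u' := by
    unfold TT
    rw [← lintegral_const_mul' _ _ (ENNReal.mul_ne_top hq hQ)]
    apply lintegral_mono_ae
    filter_upwards [ae_mem_of_null hK] with x hx
    rw [hΦ, Set.piecewise_eq_of_mem _ _ _ hx]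
    exact min_le_right _ _
  calc TT μ S w f u ≤ _ := h1
    _ = _ := h2
    _ ≤ _ := by gcongr; exact h3.trans (by gcongr)

/-- Uniform Feller-type estimate. -/
theorem feller (hSm : Measurable S) (hwm : Measurable w) (hK : μ Kᶜ = 0)
    (hKm : MeasurableSet K)
    (hinv : ∀ u ∈ A, ∀ x ∈ K, S u + x ∈ A) {E q D : ℝ≥0}
    (hw : ∀ x, w x ≤ E) (hw' : ∀ x, (E : ℝ≥0∞)⁻¹ ≤ w x) (E1 : 1 ≤ E) (q1 : 1 ≤ q)
    {δ g : ℝ} (hδ : 0 < δ) (hg0 : 0 ≤ g) (hg : q * E ^ 2 * g ≤ 1 / 2)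
    (hmod : ∀ v ∈ A, ∀ v' ∈ A, ‖v - v'‖ ≤ δ → w v ≤ q * w v')
    (pr : H → H)
    (hsq : ∀ u ∈ A, ∀ u' ∈ A, ‖(S u - S u') - pr (S u - S u')‖ ≤ g * ‖u - u'‖)
    (hsh : ∀ u ∈ A, ∀ u' ∈ A, ∀ c : ℝ≥0∞, c ≠ ⊤ → ∀ Φ : H → ℝ≥0∞, Measurable Φ → (∀ x, Φ x ≤ c) →
      ∫⁻ x, Φ (x + pr (S u - S u')) ∂μ ≤ ∫⁻ x, Φ x ∂μ + c * (D * ENNReal.ofReal ‖u - u'‖))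
    (k : ℕ) : ∀ u ∈ A, ∀ u' ∈ A, ‖u - u'‖ ≤ δ →
      (TT μ S w)^[k] (fun _ => 1) u ≤ (q : ℝ≥0∞) ^ k * (TT μ S w)^[k] (fun _ => 1) u' +
        (2 * E ^ 2 * D : ℝ≥0) * ENNReal.ofReal ‖u - u'‖ *
          ⨆ v ∈ A, (TT μ S w)^[k] (fun _ => 1) v := by
  induction k with
  | zero => intro u hu u' hu' _; simp
  | succ k ih =>
    intro u hu u' hu' huu
    set M := ⨆ v ∈ A, (TT μ S w)^[k] (fun _ => 1) v with hMdef
    have hfM : ∀ v ∈ A, (TT μ S w)^[k] (fun _ => 1) v ≤ M := fun v hv =>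
      le_iSup₂ (f := fun v (_ : v ∈ A) => (TT μ S w)^[k] (fun _ => 1) v) v hv
    have hMtop : M ≠ ⊤ := by
      refine ne_top_of_le_ne_top (b := (E : ℝ≥0∞) ^ k) (by simp) ?_
      exact iSup₂_le fun v hv => TT_iter_one_le hK hinv hw k v hv
    set M' := ⨆ v ∈ A, (TT μ S w)^[k + 1] (fun _ => 1) v with hM'def
    have hMM' : M ≤ E * M' := by
      refine iSup₂_le fun v hv => ?_
      have h1 := TT_add_ge (w := w) hK hinv k 1 (c := (E : ℝ≥0∞)⁻¹)
        (by simp; positivity) (by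
          have := TT_iter_one_ge hK hinv hw' 1
          simpa using this) v hv
      have h2 : (TT μ S w)^[k + 1] (fun _ => 1) v ≤ M' :=
        le_iSup₂ (f := fun v (_ : v ∈ A) => (TT μ S w)^[k + 1] (fun _ => 1) v) v hv
      have h3 := h1.trans h2
      rwa [ENNReal.inv_mul_le_iff (by simp; positivity) (by simp)] at h3
    have hgd : ∀ x : ℝ, ENNReal.ofReal (g * x) = ENNReal.ofReal g * ENNReal.ofReal x :=
      fun x => ENNReal.ofReal_mul hg0
    have hstep := feller_step (μ := μ) (S := S) (w := w) (A := A) (K := K) hSm hwm hK hKm hinv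
      (E := E) (M := M) (q := q) (Q := (q : ℝ≥0∞) ^ k) (C := (2 * E ^ 2 * D : ℝ≥0))
      (D := D * ENNReal.ofReal ‖u - u'‖) (g := ENNReal.ofReal g * ENNReal.ofReal ‖u - u'‖)
      hw (by simp) hMtop (by simp) (by simp) (f := (TT μ S w)^[k] (fun _ => 1))
      (TT_iter_meas hSm hwm measurable_const k) hfM (h := pr (S u - S u')) hu hu' ?_
      (hsh u hu u' hu')
    · simp only [Function.iterate_succ_apply'] at *
      refine hstep.trans ?_
      rw [pow_succ' (q : ℝ≥0∞) k, add_assoc]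
      refine add_le_add le_rfl ?_
      have hgq : (q : ℝ≥0∞) * E ^ 2 * ENNReal.ofReal g ≤ 2⁻¹ := by
        have := ENNReal.ofReal_le_ofReal hg
        rw [ENNReal.ofReal_mul (by positivity), ENNReal.ofReal_mul (by positivity),
          ENNReal.ofReal_pow (by positivity)] at this
        simpa using this
      set d := ENNReal.ofReal ‖u - u'‖
      set g' := ENNReal.ofReal g
      calc (E : ℝ≥0∞) * M * (D * d) + q * E * (((2 * E ^ 2 * D : ℝ≥0) : ℝ≥0∞) * (g' * d) * M)
          ≤ E * (E * M') * (D * d) + q * E * (((2 * E ^ 2 * D : ℝ≥0) : ℝ≥0∞) * (g' * d) * (E * M')) := by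
            gcongr
        _ = E ^ 2 * D * d * M' + (q * E ^ 2 * g') * (((2 * E ^ 2 * D : ℝ≥0) : ℝ≥0∞) * d * M') := by
            ring
        _ ≤ E ^ 2 * D * d * M' + 2⁻¹ * (((2 * E ^ 2 * D : ℝ≥0) : ℝ≥0∞) * d * M') := by gcongr
        _ = E ^ 2 * D * d * M' + (2⁻¹ * 2) * (E ^ 2 * D * d * M') := by
            push_cast; ring
        _ = 2 * (E ^ 2 * D * d * M') := by
            rw [ENNReal.inv_mul_cancel (by simp) (by simp)]; ring
        _ = ((2 * E ^ 2 * D : ℝ≥0) : ℝ≥0∞) * d * M' := by push_cast; ring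
    · intro v hv v' hv' hvv
      have hn : ‖v - v'‖ ≤ g * ‖u - u'‖ := by rw [hvv]; exact hsq u hu u' hu'
      have hg1 : g ≤ 1 := by
        have hE1 : (1 : ℝ) ≤ E := by exact_mod_cast E1
        have hq1 : (1 : ℝ) ≤ q := by exact_mod_cast q1
        have : (1 : ℝ) ≤ q * E ^ 2 := by nlinarith [mul_le_mul hq1 hE1 (by norm_num) (by linarith)]
        nlinarith
      have hn' : ‖v - v'‖ ≤ δ := by
        have := mul_le_mul_of_nonneg_right hg1 (norm_nonneg (u - u'))
        linarith
      refine ⟨hmod v hv v' hv' hn', (ih v hv v' hv' hn').trans ?_⟩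
      gcongr
      rw [← hgd]
      exact ENNReal.ofReal_le_ofReal hn

end feller

/-- Uniform reachability of a point. -/
def Reach [MeasurableSpace H] (μ : Measure H) (S : H → H) (w : H → ℝ≥0∞) (A : Set H) (y : H) :
    Prop :=
  ∀ δ : ℝ, 0 < δ → ∃ s : ℕ, ∃ c : ℝ≥0∞, c ≠ 0 ∧ ∀ (f : H → ℝ≥0∞) (m : ℝ≥0∞),
    (∀ v ∈ A, ‖v - y‖ < δ → m ≤ f v) → ∀ u ∈ A, c * m ≤ (TT μ S w)^[s] f u

section reach

variable [SecondCountableTopology H] [MeasurableSpace H] [BorelSpace H]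
  {μ : Measure H} [IsProbabilityMeasure μ] {S : H → H}
  {w : H → ℝ≥0∞} {A K : Set H}

theorem one_step (hK : μ Kᶜ = 0) (hinv : ∀ u ∈ A, ∀ x ∈ K, S u + x ∈ A) {E' : ℝ≥0∞}
    (hw : ∀ x, E' ≤ w x) {f : H → ℝ≥0∞} {m : ℝ≥0∞} {δ : ℝ} {v v' x : H} (hv : v ∈ A)
    (hf : ∀ z ∈ A, ‖z - (S v' + x)‖ < δ → m ≤ f z) (hvv : ‖S v - S v'‖ < δ / 2) :
    E' * μ (Metric.ball x (δ / 2)) * m ≤ TT μ S w f v := by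
  calc E' * μ (Metric.ball x (δ / 2)) * m = ∫⁻ y in Metric.ball x (δ / 2), E' * m ∂μ := by
        rw [setLIntegral_const]; ring
    _ ≤ ∫⁻ y in Metric.ball x (δ / 2), w (S v + y) * f (S v + y) ∂μ := by
        apply lintegral_mono_ae
        filter_upwards [ae_restrict_mem Metric.isOpen_ball.measurableSet,
          ae_restrict_of_ae (ae_mem_of_null hK)] with y hy hyK
        gcongr
        · exact hw _
        · apply hf _ (hinv v hv y hyK)
          have : S v + y - (S v' + x) = (S v - S v') + (y - x) := by abel
          rw [this]
          refine (norm_add_le _ _).trans_lt ?_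
          rw [mem_ball_iff_norm] at hy
          linarith
    _ ≤ TT μ S w f v := setLIntegral_le_lintegral _ _

theorem reach_near (hK : μ Kᶜ = 0) (hinv : ∀ u ∈ A, ∀ x ∈ K, S u + x ∈ A) {E' : ℝ≥0∞}
    (hE' : E' ≠ 0) (hw : ∀ x, E' ≤ w x)
    (hS : ∀ ε > 0, ∃ δ > 0, ∀ v ∈ A, ∀ v' ∈ A, ‖v - v'‖ < δ → ‖S v - S v'‖ < ε)
    (h0 : (0 : H) ∈ K) (h0' : ∀ r > 0, μ (Metric.ball 0 r) ≠ 0) (n : ℕ) :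
    ∀ δ : ℝ, 0 < δ → ∃ c : ℝ≥0∞, c ≠ 0 ∧ ∀ (f : H → ℝ≥0∞) (m : ℝ≥0∞), ∀ u ∈ A,
      (∀ v ∈ A, ‖v - S^[n] u‖ < δ → m ≤ f v) → c * m ≤ (TT μ S w)^[n] f u := by
  induction n with
  | zero =>
    intro δ hδ
    refine ⟨1, one_ne_zero, fun f m u hu h => ?_⟩
    simpa using h u hu (by simpa using hδ)
  | succ n ih =>
    intro δ hδ
    obtain ⟨δ', hδ', hS'⟩ := hS (δ / 2) (by positivity)
    obtain ⟨c, hc, hcc⟩ := ih δ' hδ'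
    refine ⟨c * (E' * μ (Metric.ball 0 (δ / 2))),
      mul_ne_zero hc (mul_ne_zero hE' (h0' _ (by positivity))), fun f m u hu h => ?_⟩
    rw [Function.iterate_succ_apply, mul_assoc]
    have hit : ∀ j, S^[j] u ∈ A := by
      intro j
      induction j with
      | zero => simpa using hu
      | succ j ihj =>
        rw [Function.iterate_succ_apply']
        simpa using hinv _ ihj 0 h0
    apply hcc _ _ u hu
    intro v hv hvn
    refine one_step (x := 0) (v' := S^[n] u) hK hinv hw hv ?_ (hS' v hv _ (hit n) hvn)
    rw [add_zero, ← Function.iterate_succ_apply' S n u]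
    exact h

theorem reach_zero (hK : μ Kᶜ = 0) (hinv : ∀ u ∈ A, ∀ x ∈ K, S u + x ∈ A) {E' : ℝ≥0∞}
    (hE' : E' ≠ 0) (hw : ∀ x, E' ≤ w x)
    (hS : ∀ ε > 0, ∃ δ > 0, ∀ v ∈ A, ∀ v' ∈ A, ‖v - v'‖ < δ → ‖S v - S v'‖ < ε)
    (h0 : (0 : H) ∈ K) (h0' : ∀ r > 0, μ (Metric.ball 0 r) ≠ 0)
    (hcon : ∀ r : ℝ, 0 < r → ∃ n : ℕ, ∀ u ∈ A, ‖S^[n] u‖ < r) : Reach μ S w A 0 := by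
  intro δ hδ
  obtain ⟨n, hn⟩ := hcon (δ / 2) (by positivity)
  obtain ⟨c, hc, h⟩ := reach_near hK hinv hE' hw hS h0 h0' n (δ / 2) (by positivity)
  refine ⟨n, c, hc, fun f m hf u hu => h f m u hu fun v hv hvn => hf v hv ?_⟩
  have := hn u hu
  calc ‖v - 0‖ = ‖(v - S^[n] u) + S^[n] u‖ := by simp
    _ ≤ _ := norm_add_le _ _
    _ < δ := by linarith

theorem reach_attain (hSc : Continuous S) (hK : μ Kᶜ = 0)
    (hinv : ∀ u ∈ A, ∀ x ∈ K, S u + x ∈ A) {E' : ℝ≥0∞}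
    (hE' : E' ≠ 0) (hw : ∀ x, E' ≤ w x) (hKpos : ∀ x ∈ K, ∀ r > 0, μ (Metric.ball x r) ≠ 0)
    (hr0 : Reach μ S w A 0) (n : ℕ) : ∀ y ∈ attain S K {0} n, Reach μ S w A y := by
  induction n with
  | zero => intro y hy; simp [attain] at hy; rwa [hy]
  | succ n ih =>
    rintro y hy δ hδ
    obtain ⟨_, ⟨y', hy', rfl⟩, x, hx, rfl⟩ := hy
    obtain ⟨δ', hδ', hS'⟩ := Metric.continuousAt_iff.1 (hSc.continuousAt (x := y')) (δ / 2)
      (by positivity)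
    obtain ⟨s, c, hc, h⟩ := ih y' hy' δ' hδ'
    refine ⟨s + 1, c * (E' * μ (Metric.ball x (δ / 2))),
      mul_ne_zero hc (mul_ne_zero hE' (hKpos x hx _ (by positivity))), fun f m hf u hu => ?_⟩
    rw [Function.iterate_succ_apply, mul_assoc]
    apply h _ _ _ u hu
    intro v hv hvn
    refine one_step (x := x) (v' := y') hK hinv hw hv hf ?_
    rw [← dist_eq_norm]
    exact hS' (by rwa [dist_eq_norm])

theorem harnack (hK : μ Kᶜ = 0) (hinv : ∀ u ∈ A, ∀ x ∈ K, S u + x ∈ A) {E q C : ℝ≥0}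
    (hE1 : 1 ≤ E) (hw : ∀ x, w x ≤ E) (hw' : ∀ x, (E : ℝ≥0∞)⁻¹ ≤ w x) (hAc : IsCompact A)
    (hAne : A.Nonempty) {Y : Set H} (hAY : A ⊆ closure Y) (hY : ∀ y ∈ Y, Reach μ S w A y)
    {δ : ℝ} (hδ : 0 < δ)
    (hF : ∀ k : ℕ, ∀ u ∈ A, ∀ u' ∈ A, ‖u - u'‖ ≤ δ →
      (TT μ S w)^[k] (fun _ => 1) u ≤ (q : ℝ≥0∞) ^ k * (TT μ S w)^[k] (fun _ => 1) u' +
        C * ENNReal.ofReal ‖u - u'‖ * ⨆ v ∈ A, (TT μ S w)^[k] (fun _ => 1) v) :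
    ∃ c : ℝ≥0∞, c ≠ 0 ∧ ∀ k : ℕ, ∀ u ∈ A,
      c * (⨆ v ∈ A, (TT μ S w)^[k] (fun _ => 1) v)
        ≤ (q : ℝ≥0∞) ^ k * (TT μ S w)^[k] (fun _ => 1) u := by
  have hE0 : (E : ℝ≥0∞) ≠ 0 := by simp; positivity
  set r : ℝ := min δ (1 / (4 * (C + 1))) with hr
  have hr0 : 0 < r := lt_min hδ (by positivity)
  have hCr : C * ENNReal.ofReal r ≤ 4⁻¹ := by
    have : (C : ℝ) * r ≤ 1 / 4 := by
      calc (C : ℝ) * r ≤ C * (1 / (4 * (C + 1))) := by gcongr; exact min_le_right _ _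
        _ ≤ 1 / 4 := by
          have hC0 : (0 : ℝ) ≤ C := C.2
          rw [mul_one_div, div_le_div_iff₀ (by positivity) (by norm_num)]; linarith
    have := ENNReal.ofReal_le_ofReal this
    rw [ENNReal.ofReal_mul (NNReal.coe_nonneg C), ENNReal.ofReal_coe_nnreal] at this
    refine this.trans (le_of_eq ?_)
    rw [one_div, ENNReal.ofReal_inv_of_pos (by norm_num)]; simp
  choose! s c hc hsc using fun y hy => hY y hy (r / 2) (by positivity)
  obtain ⟨t, htY, hcov⟩ : ∃ t : Finset H, (t : Set H) ⊆ Y ∧ A ⊆ ⋃ y ∈ t, Metric.ball y (r / 2) := by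
    obtain ⟨b', hb1, hb2, hb3⟩ := hAc.elim_finite_subcover_image (b := Y)
      (c := fun y => Metric.ball y (r / 2)) (fun _ _ => Metric.isOpen_ball) (by
        intro a ha
        obtain ⟨y, hy, hd⟩ := Metric.mem_closure_iff.1 (hAY ha) (r / 2) (by positivity)
        simp only [Set.mem_iUnion]
        exact ⟨y, hy, hd⟩)
    exact ⟨hb2.toFinset, by simpa using hb1, by simpa using hb3⟩
  refine ⟨t.inf (fun y => c y * 4⁻¹ * ((E : ℝ≥0∞) ^ (s y))⁻¹), ?_, ?_⟩
  · rw [← bot_eq_zero', ← bot_lt_iff_ne_bot, Finset.lt_inf_iff (by simp)]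
    intro y hy
    rw [bot_eq_zero', pos_iff_ne_zero]
    refine mul_ne_zero (mul_ne_zero (hc y (htY hy)) (by simp)) ?_
    simp [ENNReal.pow_eq_top_iff]
  · intro k u hu
    set f := (TT μ S w)^[k] (fun _ => 1) with hf
    set M := ⨆ v ∈ A, f v with hM
    have hfM : ∀ v ∈ A, f v ≤ M := fun v hv => le_iSup₂ (f := fun v (_ : v ∈ A) => f v) v hv
    have hMtop : M ≠ ⊤ := by
      refine ne_top_of_le_ne_top (b := (E : ℝ≥0∞) ^ k) (by simp) ?_
      exact iSup₂_le fun v hv => TT_iter_one_le hK hinv hw k v hv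
    have hM0 : M ≠ 0 := by
      obtain ⟨a, ha⟩ := hAne
      have h1 := (TT_iter_one_ge hK hinv hw' k a ha).trans (hfM a ha)
      intro h0
      rw [h0, nonpos_iff_eq_zero] at h1
      simp at h1
    obtain ⟨v₀, hv₀, hv₀M⟩ : ∃ v ∈ A, M / 2 < f v := by
      have := ENNReal.half_lt_self hM0 hMtop
      conv_rhs at this => rw [hM]
      obtain ⟨v, hv⟩ := lt_iSup_iff.1 this
      obtain ⟨hv1, hv2⟩ := lt_iSup_iff.1 hv
      exact ⟨v, hv1, hv2⟩
    obtain ⟨y, hy, hvy⟩ : ∃ y ∈ t, ‖v₀ - y‖ < r / 2 := by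
      have := hcov hv₀
      simp only [Set.mem_iUnion] at this
      obtain ⟨y, hy, h⟩ := this
      exact ⟨y, hy, by rwa [mem_ball_iff_norm] at h⟩
    have hlow : ∀ v ∈ A, ‖v - y‖ < r / 2 → 4⁻¹ * M ≤ (q : ℝ≥0∞) ^ k * f v := by
      intro v hv hvy'
      have hd : ‖v₀ - v‖ ≤ r := by
        have : v₀ - v = (v₀ - y) - (v - y) := by abel
        rw [this]
        refine (norm_sub_le _ _).trans (by linarith)
      have h1 := hF k v₀ hv₀ v hv (hd.trans (min_le_left _ _))
      have h2 : M / 2 ≤ (q : ℝ≥0∞) ^ k * f v + 4⁻¹ * M := by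
        refine hv₀M.le.trans (h1.trans ?_)
        gcongr
        refine le_trans ?_ hCr
        gcongr
      have h3 : M / 2 = 4⁻¹ * M + 4⁻¹ * M := by
        rw [← add_mul, ENNReal.div_eq_inv_mul]
        congr 1
        have : (4 : ℝ≥0∞) = 2 * 2 := by norm_num
        rw [this, ENNReal.mul_inv (by simp) (by simp), ← mul_add, ENNReal.inv_two_add_inv_two, mul_one]
      rw [h3] at h2
      exact (ENNReal.add_le_add_iff_right (ENNReal.mul_ne_top (by simp) hMtop)).1 h2
    have h5 := hsc y (htY hy) (fun v => (q : ℝ≥0∞) ^ k * f v) (4⁻¹ * M) hlow u hu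
    rw [TT_iter_smul (by simp)] at h5
    have h6 : (TT μ S w)^[s y] f u ≤ (E : ℝ≥0∞) ^ (s y) * f u := by
      rw [hf, ← Function.iterate_add_apply, add_comm]
      exact TT_add_le hK hinv k (s y) (by simp) (TT_iter_one_le hK hinv hw (s y)) u hu
    calc t.inf (fun y => c y * 4⁻¹ * ((E : ℝ≥0∞) ^ (s y))⁻¹) * M
        ≤ (c y * 4⁻¹ * ((E : ℝ≥0∞) ^ (s y))⁻¹) * M := by
          gcongr
          exact Finset.inf_le (f := fun y => c y * 4⁻¹ * ((E : ℝ≥0∞) ^ (s y))⁻¹) hy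
      _ = ((E : ℝ≥0∞) ^ (s y))⁻¹ * (c y * (4⁻¹ * M)) := by ring
      _ ≤ ((E : ℝ≥0∞) ^ (s y))⁻¹ * ((q : ℝ≥0∞) ^ k * ((E : ℝ≥0∞) ^ (s y) * f u)) := by
          refine mul_le_mul_right (h5.trans ?_) _
          exact mul_le_mul_right h6 _
      _ = (((E : ℝ≥0∞) ^ (s y))⁻¹ * (E : ℝ≥0∞) ^ (s y)) * ((q : ℝ≥0∞) ^ k * f u) := by ring
      _ = _ := by
          rw [ENNReal.inv_mul_cancel (pow_ne_zero _ hE0) (by simp), one_mul]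

end reach

section geom

theorem attainDom_inv {S : H → H} (hSc : Continuous S) {K B : Set H} :
    ∀ u ∈ attainDom S K B, ∀ x ∈ K, S u + x ∈ attainDom S K B := by
  intro u hu x hx
  have hc : Continuous (fun v => S v + x) := by fun_prop
  refine map_mem_closure (f := fun v => S v + x) hc hu ?_
  intro v hv
  obtain ⟨n, hn⟩ := Set.mem_iUnion.1 hv
  exact Set.mem_iUnion.2 ⟨n + 1, Set.add_mem_add (Set.mem_image_of_mem _ hn) hx⟩

theorem attain_compact {S : H → H} (hSc : Continuous S) {K : Set H} (hK : IsCompact K) (n : ℕ) :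
    IsCompact (attain S K {0} n) := by
  induction n with
  | zero => exact isCompact_singleton
  | succ n ih => exact (ih.image hSc).add hK

theorem attain_mono {S : H → H} {K B B' : Set H} (h : B ⊆ B') (n : ℕ) :
    attain S K B n ⊆ attain S K B' n := by
  induction n with
  | zero => exact h
  | succ n ih => exact Set.add_subset_add (Set.image_mono ih) le_rfl

theorem attain_bdd {S : H → H} (hSc : Continuous S) {K : Set H} (hK : IsCompact K)
    (hB : CondB S K) : ∃ R : ℝ, 0 < R ∧ (⋃ n, attain S K {0} n) ⊆ Metric.closedBall (0 : H) R := by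
  obtain ⟨ρ, hρ, k₀, -, h⟩ := hB
  have hb : Bornology.IsBounded (⋃ n ∈ Finset.range (k₀ 0), attain S K {0} n) := by
    rw [Bornology.isBounded_biUnion_finset]
    intro n _
    exact (attain_compact hSc hK n).isBounded
  obtain ⟨R, hR⟩ := hb.subset_closedBall 0
  refine ⟨max R ρ, lt_max_of_lt_right hρ, ?_⟩
  intro v hv
  obtain ⟨n, hn⟩ := Set.mem_iUnion.1 hv
  by_cases hnk : n < k₀ 0
  · refine Metric.closedBall_subset_closedBall (le_max_left _ _) (hR ?_)
    simp only [Set.mem_iUnion]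
    exact ⟨n, by simpa using hnk, hn⟩
  · refine Metric.closedBall_subset_closedBall (le_max_right _ _) ?_
    refine h 0 le_rfl n (not_lt.1 hnk) (attain_mono ?_ n hn)
    simp

theorem abs_repr_le (e : HilbertBasis ℕ ℝ H) (v : H) (j : ℕ) : |e.repr v j| ≤ ‖v‖ := by
  rw [e.repr_apply_apply]
  have := abs_real_inner_le_norm (e j : H) v
  rwa [e.orthonormal.1 j, one_mul] at this

theorem image_totallyBounded {S : H → H} (e : HilbertBasis ℕ ℝ H) (hC : CondC S e) (hA : CondA S)
    {R : ℝ} (hR : 0 < R) : TotallyBounded (S '' Metric.closedBall (0 : H) R) := by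
  obtain ⟨γ, hpos, -, hγ, hsq⟩ := hC R hR
  obtain ⟨C, hC0, a, -, -, n₀, -, hL, -⟩ := hA.2 R (R / 2) (by positivity) (by linarith)
  rw [Metric.totallyBounded_iff]
  intro ε hε
  have h1 : Tendsto (fun N => γ N * R) atTop (𝓝 0) := by simpa using hγ.mul_const R
  obtain ⟨N, hN⟩ := ((tendsto_order.1 h1).2 (ε / 2) (by positivity)).exists
  let F : (Fin N → ℝ) → H := fun x => S 0 + ∑ j : Fin N, x j • (e j : H)
  have hF : Continuous F := by fun_prop
  have hcomp : IsCompact (F '' (Set.univ.pi fun _ => Set.Icc (-(C * R)) (C * R))) :=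
    (isCompact_univ_pi fun _ => isCompact_Icc).image hF
  obtain ⟨t, ht, htc⟩ := Metric.totallyBounded_iff.1 hcomp.totallyBounded (ε / 2) (by positivity)
  refine ⟨t, ht, ?_⟩
  rintro _ ⟨u, hu, rfl⟩
  have h0 : (0 : H) ∈ Metric.closedBall (0 : H) R := by simp [hR.le]
  have hun : ‖u‖ ≤ R := by simpa using hu
  have hLu := hL u hu 0 h0
  rw [sub_zero] at hLu
  have hz : F (fun j => e.repr (S u - S 0) j) ∈
      F '' (Set.univ.pi fun _ => Set.Icc (-(C * R)) (C * R)) := by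
    refine Set.mem_image_of_mem _ ?_
    intro j _
    rw [Set.mem_Icc, ← abs_le]
    refine (abs_repr_le e _ _).trans (hLu.trans (by gcongr))
  have := htc hz
  simp only [Set.mem_iUnion] at this ⊢
  obtain ⟨y, hy, hd⟩ := this
  refine ⟨y, hy, ?_⟩
  have hs := hsq N u hu 0 h0
  rw [sub_zero] at hs
  have hpr : projB e N (S u - S 0) = ∑ j : Fin N, e.repr (S u - S 0) j • (e j : H) := by
    unfold projB; rw [Finset.sum_range]
  have hd2 : dist (S u) (F (fun j => e.repr (S u - S 0) j)) < ε / 2 := by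
    rw [dist_eq_norm]
    have : S u - F (fun j => e.repr (S u - S 0) j) = (S u - S 0) - projB e N (S u - S 0) := by
      rw [hpr]; simp only [F]; abel
    rw [this]
    refine hs.trans_lt (lt_of_le_of_lt ?_ hN)
    have := (hpos N).le
    gcongr
  rw [Metric.mem_ball] at hd ⊢
  linarith [dist_triangle (S u) (F (fun j => e.repr (S u - S 0) j)) y]

theorem attainDom_compact {S : H → H} {K : Set H} (hK : IsCompact K) (e : HilbertBasis ℕ ℝ H)
    (hC : CondC S e) (hA : CondA S) (hB : CondB S K) : IsCompact (attainDom S K {0}) := by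
  obtain ⟨R, hR, hsub⟩ := attain_bdd hA.1.continuous hK hB
  have htb : TotallyBounded (⋃ n, attain S K {0} n) := by
    have h1 : IsCompact (closure (S '' Metric.closedBall (0 : H) R) + K) :=
      ((image_totallyBounded e hC hA hR).closure.isCompact_of_isClosed isClosed_closure).add hK
    refine (h1.union (isCompact_singleton (x := (0 : H)))).totallyBounded.subset ?_
    intro v hv
    obtain ⟨n, hn⟩ := Set.mem_iUnion.1 hv
    cases n with
    | zero => right; exact hn
    | succ n =>
      left
      refine Set.add_subset_add ?_ le_rfl hn
      refine (Set.image_mono ?_).trans subset_closure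
      exact (Set.subset_iUnion _ n).trans hsub
  exact htb.closure.isCompact_of_isClosed isClosed_closure

theorem attainDom_bdd {S : H → H} (hSc : Continuous S) {K : Set H} (hK : IsCompact K)
    (hB : CondB S K) : ∃ R : ℝ, 0 < R ∧ attainDom S K {0} ⊆ Metric.closedBall (0 : H) R := by
  obtain ⟨R, hR, h⟩ := attain_bdd hSc hK hB
  exact ⟨R, hR, closure_minimal h Metric.isClosed_closedBall⟩

theorem zero_mem_attainDom {S : H → H} {K : Set H} : (0 : H) ∈ attainDom S K {0} :=
  subset_closure (Set.mem_iUnion.2 ⟨0, rfl⟩)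

theorem contraction {S : H → H} (hA : CondA S) {A : Set H} {R : ℝ} (hR : 0 < R)
    (hAR : A ⊆ Metric.closedBall (0 : H) R) (r : ℝ) (hr : 0 < r) :
    ∃ n : ℕ, ∀ u ∈ A, ‖S^[n] u‖ < r := by
  set R' := R + r
  obtain ⟨C, hC0, a, ha0, ha1, n₀, -, -, h⟩ := hA.2 R' (r / 2) (by positivity)
    (by simp only [R']; linarith)
  have key : ∀ u ∈ A, ∀ j : ℕ, ‖S^[n₀ * j] u‖ ≤ max (a ^ j * R') (r / 2) := by
    intro u hu j
    induction j with
    | zero =>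
      have : ‖u‖ ≤ R := by simpa using hAR hu
      simp only [mul_zero, Function.iterate_zero, id_eq, pow_zero, one_mul]
      exact le_max_of_le_left (by simp only [R']; linarith)
    | succ j ih =>
      rw [Nat.mul_succ, add_comm, Function.iterate_add_apply]
      have hj : a ^ j * R' ≤ R' := by
        have : a ^ j ≤ 1 := pow_le_one₀ ha0.le ha1.le
        have hR' : 0 ≤ R' := by positivity
        nlinarith
      have hmem : S^[n₀ * j] u ∈ Metric.closedBall (0 : H) R' := by
        simp only [mem_closedBall_zero_iff]
        exact ih.trans (max_le hj (by simp only [R']; linarith))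
      refine (h _ hmem n₀ le_rfl).trans (max_le ?_ (le_max_right _ _))
      calc a * ‖S^[n₀ * j] u‖ ≤ a * max (a ^ j * R') (r / 2) := by gcongr
        _ = max (a * (a ^ j * R')) (a * (r / 2)) := mul_max_of_nonneg _ _ ha0.le
        _ ≤ _ := by
          refine max_le_max (le_of_eq (by ring)) ?_
          nlinarith
  have h1 : Tendsto (fun j : ℕ => a ^ j * R') atTop (𝓝 0) := by
    simpa using (tendsto_pow_atTop_nhds_zero_of_lt_one ha0.le ha1).mul_const R'
  obtain ⟨j, hj⟩ := ((tendsto_order.1 h1).2 r hr).exists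
  exact ⟨n₀ * j, fun u hu => (key u hu j).trans_lt (max_lt hj (by linarith))⟩

end geom

section noise

/-- One-dimensional shift estimate. -/
theorem shift_one {p : ℝ → ℝ} {L : ℝ≥0} (hL : LipschitzWith L p)
    (hsupp : Function.support p ⊆ Set.Icc (-1 : ℝ) 1) (s : ℝ) {c : ℝ≥0∞}
    {Ψ : ℝ → ℝ≥0∞} (hΨ : Measurable Ψ) (hc : ∀ t, Ψ t ≤ c) :
    ∫⁻ t, Ψ (t + s) ∂((volume : Measure ℝ).withDensity fun x => ENNReal.ofReal (p x))
      ≤ ∫⁻ t, Ψ t ∂((volume : Measure ℝ).withDensity fun x => ENNReal.ofReal (p x))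
        + c * ENNReal.ofReal (2 * L * |s|) := by
  have hpm : Measurable fun x => ENNReal.ofReal (p x) := hL.continuous.measurable.ennreal_ofReal
  rw [lintegral_withDensity_eq_lintegral_mul _ hpm (by fun_prop),
    lintegral_withDensity_eq_lintegral_mul _ hpm hΨ]
  simp only [Pi.mul_apply]
  have h1 : ∫⁻ t, ENNReal.ofReal (p t) * Ψ (t + s) = ∫⁻ t, ENNReal.ofReal (p (t - s)) * Ψ t := by
    rw [← lintegral_sub_right_eq_self (fun t => ENNReal.ofReal (p t) * Ψ (t + s)) s]
    simp
  rw [h1]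
  have h2 : ∀ t, ENNReal.ofReal (p (t - s)) * Ψ t ≤ ENNReal.ofReal (p t) * Ψ t +
      (Set.Icc (s - 1) (s + 1)).indicator (fun _ => c * ENNReal.ofReal (L * |s|)) t := by
    intro t
    by_cases ht : t ∈ Set.Icc (s - 1) (s + 1)
    · rw [Set.indicator_of_mem ht]
      have h3 : p (t - s) ≤ p t + L * |s| := by
        have := hL.dist_le_mul (t - s) t
        rw [Real.dist_eq, Real.dist_eq] at this
        have h4 := (abs_le.1 this).2
        rw [show t - s - t = -s by ring, abs_neg] at h4
        linarith
      calc ENNReal.ofReal (p (t - s)) * Ψ t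
          ≤ (ENNReal.ofReal (p t) + ENNReal.ofReal (L * |s|)) * Ψ t := by
            gcongr
            exact (ENNReal.ofReal_le_ofReal h3).trans ENNReal.ofReal_add_le
        _ ≤ _ := by
            rw [add_mul, mul_comm c]
            gcongr
            exact hc t
    · have : p (t - s) = 0 := by
        by_contra h
        have := hsupp h
        apply ht
        rw [Set.mem_Icc] at this ⊢
        constructor <;> linarith [this.1, this.2]
      simp [this]
  refine (lintegral_mono h2).trans ?_
  rw [lintegral_add_right _ (measurable_const.indicator measurableSet_Icc),
    lintegral_indicator_const measurableSet_Icc, Real.volume_Icc]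
  refine add_le_add le_rfl ?_
  rw [mul_assoc, ← ENNReal.ofReal_mul (by positivity)]
  exact mul_le_mul' le_rfl (ENNReal.ofReal_le_ofReal (le_of_eq (by ring)))

theorem hasSum_meas {Ω : Type} {m : MeasurableSpace Ω} [SecondCountableTopology H]
    [MeasurableSpace H] [BorelSpace H] {c : ℕ → Ω → H} {X : Ω → H}
    (hc : ∀ j, Measurable (c j)) (h : ∀ ω, HasSum (fun j => c j ω) (X ω)) : Measurable X := by
  refine measurable_of_tendsto_metrizable (f := fun n ω => ∑ j ∈ Finset.range n, c j ω)
    (fun n => by fun_prop) ?_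
  rw [tendsto_pi_nhds]
  exact fun ω => (h ω).tendsto_sum_nat

/-- sigma-algebra generated by a family of the scalar variables -/
abbrev sg {Ω : Type} (ξ : ℕ → ℕ → Ω → ℝ) (J : Set (ℕ × ℕ)) : MeasurableSpace Ω :=
  ⨆ jk ∈ J, MeasurableSpace.comap (ξ jk.1 jk.2) inferInstance

theorem sg_meas {Ω : Type} (ξ : ℕ → ℕ → Ω → ℝ) {J : Set (ℕ × ℕ)} {j k : ℕ} (h : (j, k) ∈ J) :
    Measurable[sg ξ J] (ξ j k) := by
  have : MeasurableSpace.comap (ξ j k) inferInstance ≤ sg ξ J :=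
    le_iSup₂ (f := fun (jk : ℕ × ℕ) (_ : jk ∈ J) =>
      MeasurableSpace.comap (ξ jk.1 jk.2) inferInstance) (j, k) h
  exact (comap_measurable (ξ j k)).mono this le_rfl

theorem sg_mono {Ω : Type} (ξ : ℕ → ℕ → Ω → ℝ) {J J' : Set (ℕ × ℕ)} (h : J ⊆ J') :
    sg ξ J ≤ sg ξ J' := biSup_mono h

variable {Ω : Type} [MeasurableSpace Ω] {P : Measure Ω} [IsProbabilityMeasure P]

theorem sg_indep {ξ : ℕ → ℕ → Ω → ℝ} (hm : ∀ j k, Measurable (ξ j k))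
    (hi : iIndepFun (fun jk : ℕ × ℕ => ξ jk.1 jk.2) P) {J J' : Set (ℕ × ℕ)} (hJ : Disjoint J J')
    {α β : Type} [MeasurableSpace α] [MeasurableSpace β] {X : Ω → α} {Y : Ω → β}
    (hX : Measurable[sg ξ J] X) (hY : Measurable[sg ξ J'] Y) : IndepFun X Y P := by
  rw [IndepFun_iff_Indep]
  have h := indep_iSup_of_disjoint (m := fun jk : ℕ × ℕ =>
    MeasurableSpace.comap (ξ jk.1 jk.2) inferInstance) (μ := P)
    (fun jk => (hm jk.1 jk.2).comap_le) hi.iIndep hJ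
  exact indep_of_indep_of_le_left (indep_of_indep_of_le_right h hY.comap_le) hX.comap_le

variable [SecondCountableTopology H] [MeasurableSpace H] [BorelSpace H]
  {e : HilbertBasis ℕ ℝ H} {η : ℕ → Ω → H} {b : ℕ → ℝ} {ξ : ℕ → ℕ → Ω → ℝ} {p : ℕ → ℝ → ℝ}

theorem eta_sg (hD : CondD P e η b ξ p) (k : ℕ) : Measurable[sg ξ {jk | jk.2 = k}] (η k) := by
  refine @hasSum_meas H _ _ _ Ω (sg ξ {jk | jk.2 = k}) _ _ _
    (fun j ω => (b j * ξ j k ω) • (e j : H)) (η k) (fun j => ?_) (hD.2.2.1 k)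
  have := sg_meas ξ (J := {jk | jk.2 = k}) (j := j) (k := k) rfl
  exact (this.const_mul (b j)).smul_const _

theorem rest_sg (hD : CondD P e η b ξ p) (i k : ℕ) :
    Measurable[sg ξ {jk | jk.1 ≠ i}] (fun ω => η k ω - (b i * ξ i k ω) • (e i : H)) := by
  refine @hasSum_meas H _ _ _ Ω (sg ξ {jk | jk.1 ≠ i}) _ _ _
    (fun j ω => (b j * ξ j k ω) • (e j : H) - if j = i then (b i * ξ i k ω) • (e i : H) else 0)
    _ (fun j => ?_) (fun ω => (hD.2.2.1 k ω).sub (hasSum_ite_eq i _))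
  by_cases hj : j = i
  · subst hj; simp
  · simp only [hj, if_false, sub_zero]
    have := sg_meas ξ (J := {jk | jk.1 ≠ i}) (j := j) (k := k) hj
    exact (this.const_mul (b j)).smul_const _

theorem eta_law (hηmeas : ∀ k, Measurable (η k)) (hD : CondD P e η b ξ p) (k : ℕ) :
    Measure.map (η k) P = Measure.map (η 1) P := by
  obtain ⟨-, -, hsum, hm, hi, hlaw, -⟩ := hD
  let F : (ℕ → ℝ) → H := fun x =>
    limUnder atTop (fun n : ℕ => ∑ j ∈ Finset.range n, (b j * x j) • (e j : H))
  have hF : Measurable F := by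
    refine (StronglyMeasurable.limUnder (f := fun (n : ℕ) (x : ℕ → ℝ) =>
      ∑ j ∈ Finset.range n, (b j * x j) • (e j : H)) fun n => ?_).measurable
    apply Measurable.stronglyMeasurable
    fun_prop
  have hηF : ∀ k, η k = fun ω => F (fun j => ξ j k ω) := by
    intro k; funext ω
    exact ((hsum k ω).tendsto_sum_nat.limUnder_eq).symm
  have hind : ∀ k, iIndepFun (fun j => ξ j k) P := fun k =>
    hi.precomp (g := fun j => (j, k)) (fun a b h => by simpa using h)
  have hid : IdentDistrib (fun ω j => ξ j k ω) (fun ω j => ξ j 1 ω) P P := by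
    refine IdentDistrib.pi (fun j => ?_) (hind k) (hind 1)
    exact ⟨(hm j k).aemeasurable, (hm j 1).aemeasurable, by rw [hlaw, hlaw]⟩
  have := (hid.comp hF).map_eq
  rw [hηF k, hηF 1]
  exact this

theorem shift_coord (hηmeas : ∀ k, Measurable (η k)) (hD : CondD P e η b ξ p)
    (hb : ∀ j, b j ≠ 0) (i : ℕ) : ∃ D : ℝ≥0, ∀ a : ℝ, ∀ c : ℝ≥0∞,
      ∀ Φ : H → ℝ≥0∞, Measurable Φ → (∀ x, Φ x ≤ c) →
      ∫⁻ x, Φ (x + a • (e i : H)) ∂(Measure.map (η 1) P)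
        ≤ ∫⁻ x, Φ x ∂(Measure.map (η 1) P) + c * (D * ENNReal.ofReal |a|) := by
  have hrest := rest_sg hD i 1
  have hD' := hD
  obtain ⟨hb0, -, hsum, hm, hi, hlaw, hLip, -, hsupp⟩ := hD
  obtain ⟨L, hL⟩ := hLip i
  set Z : Ω → H := fun ω => η 1 ω - (b i * ξ i 1 ω) • (e i : H) with hZ
  have hZm : Measurable Z := by
    have := hm i 1; have := hηmeas 1
    fun_prop
  have hind : IndepFun (ξ i 1) Z P := by
    refine sg_indep hm hi (J := {jk | jk.1 = i}) (J' := {jk | jk.1 ≠ i}) ?_ (sg_meas ξ rfl) hrest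
    rw [Set.disjoint_left]; intro x hx hx'; exact hx' hx
  have hmap := (indepFun_iff_map_prod_eq_prod_map_map (hm i 1).aemeasurable hZm.aemeasurable).1 hind
  have hprob : IsProbabilityMeasure (Measure.map Z P) :=
    Measure.isProbabilityMeasure_map hZm.aemeasurable
  have hprob2 : IsProbabilityMeasure (Measure.map (ξ i 1) P) :=
    Measure.isProbabilityMeasure_map (hm i 1).aemeasurable
  have hrep : ∀ Ψ : H → ℝ≥0∞, Measurable Ψ → ∫⁻ x, Ψ x ∂(Measure.map (η 1) P) =
      ∫⁻ z, ∫⁻ t, Ψ ((b i * t) • (e i : H) + z) ∂(Measure.map (ξ i 1) P) ∂(Measure.map Z P) := by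
    intro Ψ hΨ
    have hg : Measurable (fun q : ℝ × H => Ψ ((b i * q.1) • (e i : H) + q.2)) := by fun_prop
    rw [← lintegral_prod_symm _ hg.aemeasurable, ← hmap,
      lintegral_map hg ((hm i 1).prodMk hZm), lintegral_map hΨ (hηmeas 1)]
    congr 1; funext ω
    simp [hZ]
  refine ⟨2 * L / Real.toNNReal (b i), fun a c Φ hΦ hc => ?_⟩
  rw [hrep _ (by fun_prop), hrep _ hΦ]
  have hbi : 0 < b i := lt_of_le_of_ne (hb0 i) (hb i).symm
  have hin : ∀ z, ∫⁻ t, Φ ((b i * t) • (e i : H) + z + a • (e i : H)) ∂(Measure.map (ξ i 1) P) ≤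
      ∫⁻ t, Φ ((b i * t) • (e i : H) + z) ∂(Measure.map (ξ i 1) P)
        + c * ((2 * L / Real.toNNReal (b i) : ℝ≥0) * ENNReal.ofReal |a|) := by
    intro z
    have h1 := shift_one hL (hsupp i) (a / b i) (c := c)
      (Ψ := fun t => Φ ((b i * t) • (e i : H) + z)) (by fun_prop) (fun t => hc _)
    have hA : (fun t => Φ ((b i * t) • (e i : H) + z + a • (e i : H))) =
        fun t => Φ ((b i * (t + a / b i)) • (e i : H) + z) := by
      funext t
      congr 1
      rw [mul_add, mul_div_cancel₀ _ (hb i), add_smul]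
      abel
    have hBB : ((2 * L / Real.toNNReal (b i) : ℝ≥0) : ℝ≥0∞) * ENNReal.ofReal |a| =
        ENNReal.ofReal (2 * L * |a / b i|) := by
      rw [abs_div, abs_of_pos hbi]
      rw [← ENNReal.ofReal_coe_nnreal, ← ENNReal.ofReal_mul (by positivity)]
      congr 1
      push_cast
      rw [Real.coe_toNNReal _ hbi.le]
      ring
    rw [hlaw, hA, hBB]
    exact h1
  refine (lintegral_mono hin).trans ?_
  rw [lintegral_add_right _ measurable_const]
  simp

theorem shift_proj (hηmeas : ∀ k, Measurable (η k)) (hD : CondD P e η b ξ p)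
    (hb : ∀ j, b j ≠ 0) (N : ℕ) : ∃ D : ℝ≥0, ∀ v : H, ∀ c : ℝ≥0∞,
      ∀ Φ : H → ℝ≥0∞, Measurable Φ → (∀ x, Φ x ≤ c) →
      ∫⁻ x, Φ (x + projB e N v) ∂(Measure.map (η 1) P)
        ≤ ∫⁻ x, Φ x ∂(Measure.map (η 1) P) + c * (D * ENNReal.ofReal ‖v‖) := by
  induction N with
  | zero => exact ⟨0, fun v c Φ hΦ hc => by simp [projB]⟩
  | succ N ih =>
    obtain ⟨D, hD1⟩ := ih
    obtain ⟨D', hD2⟩ := shift_coord hηmeas hD hb N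
    refine ⟨D + D', fun v c Φ hΦ hc => ?_⟩
    have hpr : ∀ x, x + projB e (N + 1) v = (x + e.repr v N • (e N : H)) + projB e N v := by
      intro x; unfold projB; rw [Finset.sum_range_succ]; abel
    simp only [hpr]
    refine (hD2 (e.repr v N) c (fun x => Φ (x + projB e N v)) (by fun_prop) (fun x => hc _)).trans ?_
    have h1 := hD1 v c Φ hΦ hc
    calc _ ≤ (∫⁻ x, Φ x ∂(Measure.map (η 1) P) + c * (D * ENNReal.ofReal ‖v‖))
          + c * (D' * ENNReal.ofReal ‖v‖) := by
          gcongr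
          exact abs_repr_le e v N
      _ = _ := by push_cast; ring

theorem norm_sq_sum (e : HilbertBasis ℕ ℝ H) (c : ℕ → ℝ) (n : ℕ) :
    ‖∑ j ∈ Finset.range n, c j • (e j : H)‖ ^ 2 = ∑ j ∈ Finset.range n, c j ^ 2 := by
  rw [← real_inner_self_eq_norm_sq, e.orthonormal.inner_sum]
  simp [sq]

theorem zero_ball (hηmeas : ∀ k, Measurable (η k)) (hD : CondD P e η b ξ p) (r : ℝ) (hr : 0 < r) :
    (Measure.map (η 1) P) (Metric.ball 0 r) ≠ 0 := by
  obtain ⟨hb0, hbs, hsum, hm, hi, hlaw, hLip, hp0, hsupp⟩ := hD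
  rw [Measure.map_apply (hηmeas 1) Metric.isOpen_ball.measurableSet]
  set B := ∑' j, b j ^ 2 with hB
  have hB0 : 0 ≤ B := tsum_nonneg fun j => sq_nonneg _
  obtain ⟨N, hN⟩ := ((tendsto_order.1 (tendsto_sum_nat_add fun j => b j ^ 2)).2 (r ^ 2 / 4)
    (by positivity)).exists
  set t : ℝ := Real.sqrt (r ^ 2 / (4 * (B + 1))) with ht
  have ht0 : 0 < t := Real.sqrt_pos.2 (by positivity)
  have htB : t ^ 2 * B ≤ r ^ 2 / 4 := by
    rw [ht, Real.sq_sqrt (by positivity), div_mul_eq_mul_div, div_le_div_iff₀ (by positivity) (by norm_num)]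
    nlinarith [sq_nonneg r]
  -- the event
  have hae : ∀ᵐ ω ∂P, ∀ j, |ξ j 1 ω| ≤ 1 := by
    rw [ae_all_iff]
    intro j
    have h1 : ∀ᵐ x ∂(Measure.map (ξ j 1) P), |x| ≤ 1 := by
      rw [hlaw, ae_withDensity_iff (by
        obtain ⟨L, hL⟩ := hLip j
        exact hL.continuous.measurable.ennreal_ofReal)]
      refine Eventually.of_forall fun x hx => ?_
      have : x ∈ Function.support (p j) := by
        intro h; apply hx; simp [h]
      exact abs_le.2 (hsupp j this)
    exact ae_of_ae_map (hm j 1).aemeasurable h1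
  have hpos : ∀ j, P (ξ j 1 ⁻¹' Set.Ioo (-t) t) ≠ 0 := by
    intro j
    rw [← Measure.map_apply (hm j 1) measurableSet_Ioo, hlaw,
      withDensity_apply _ measurableSet_Ioo]
    obtain ⟨L, hL⟩ := hLip j
    have hcont := hL.continuous
    rw [← pos_iff_ne_zero, setLIntegral_pos_iff (by fun_prop)]
    have hopen : IsOpen ({x | 0 < p j x} ∩ Set.Ioo (-t) t) :=
      (isOpen_lt continuous_const hcont).inter isOpen_Ioo
    refine (hopen.measure_pos volume ⟨0, hp0 j, by simp [ht0]⟩).trans_le (measure_mono ?_)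
    rintro x ⟨hx1, hx2⟩
    refine ⟨?_, hx2⟩
    simp only [Function.mem_support, ne_eq, ENNReal.ofReal_eq_zero, not_le]
    exact hx1
  have hevent : P (⋂ j ∈ Finset.range N, ξ j 1 ⁻¹' Set.Ioo (-t) t) ≠ 0 := by
    have hind : iIndepFun (fun j => ξ j 1) P :=
      hi.precomp (g := fun j => (j, 1)) (fun a b h => by simpa using h)
    rw [hind.meas_biInter (fun j _ => ⟨_, measurableSet_Ioo, rfl⟩)]
    exact Finset.prod_ne_zero_iff.2 fun j _ => hpos j
  intro h0
  apply hevent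
  refine measure_mono_null_ae ?_ h0
  filter_upwards [hae] with ω hω hmem
  have hmem' : ∀ j < N, ξ j 1 ω ^ 2 ≤ t ^ 2 := by
    intro j hj
    have h1 : ω ∈ ⋂ j ∈ Finset.range N, ξ j 1 ⁻¹' Set.Ioo (-t) t := hmem
    simp only [Set.mem_iInter] at h1
    have := h1 j (Finset.mem_range.2 hj)
    exact sq_le_sq' this.1.le this.2.le
  have hfin : ∀ n, ‖∑ j ∈ Finset.range n, (b j * ξ j 1 ω) • (e j : H)‖ ^ 2 ≤ r ^ 2 / 2 := by
    intro n
    rw [norm_sq_sum]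
    calc ∑ j ∈ Finset.range n, (b j * ξ j 1 ω) ^ 2
        ≤ ∑ j ∈ Finset.range (N + n), (b j * ξ j 1 ω) ^ 2 :=
          Finset.sum_le_sum_of_subset_of_nonneg (by intro x; simp; omega)
            (fun _ _ _ => sq_nonneg _)
      _ = ∑ j ∈ Finset.range N, (b j * ξ j 1 ω) ^ 2
          + ∑ j ∈ Finset.range n, (b (N + j) * ξ (N + j) 1 ω) ^ 2 := Finset.sum_range_add _ _ _
      _ ≤ ∑ j ∈ Finset.range N, t ^ 2 * b j ^ 2 + ∑ j ∈ Finset.range n, b (j + N) ^ 2 := by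
          refine add_le_add (Finset.sum_le_sum fun j hj => ?_) (Finset.sum_le_sum fun j hj => ?_)
          · rw [mul_pow, mul_comm]
            exact mul_le_mul_of_nonneg_right (hmem' j (Finset.mem_range.1 hj)) (sq_nonneg _)
          · rw [mul_pow, add_comm N j]
            have : ξ (j + N) 1 ω ^ 2 ≤ 1 := by
              rw [sq_le_one_iff_abs_le_one]; exact hω _
            nlinarith [sq_nonneg (b (j + N))]
      _ ≤ t ^ 2 * B + ∑' j, b (j + N) ^ 2 := by
          rw [← Finset.mul_sum]
          gcongr
          · exact hbs.sum_le_tsum _ (fun _ _ => sq_nonneg _)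
          · exact ((summable_nat_add_iff N).2 hbs).sum_le_tsum _ (fun _ _ => sq_nonneg _)
      _ ≤ r ^ 2 / 2 := by linarith
  have hlim : ‖η 1 ω‖ ^ 2 ≤ r ^ 2 / 2 :=
    le_of_tendsto (((hsum 1 ω).tendsto_sum_nat.norm).pow 2) (Eventually.of_forall hfin)
  change η 1 ω ∈ Metric.ball 0 r
  rw [mem_ball_zero_iff]
  refine lt_of_pow_lt_pow_left₀ 2 hr.le ?_
  have : 0 < r ^ 2 := by positivity
  linarith

end noise

section markov

variable {Ω : Type} [MeasurableSpace Ω] {P : Measure Ω} [IsProbabilityMeasure P]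
variable [SecondCountableTopology H] [MeasurableSpace H] [BorelSpace H]
  {e : HilbertBasis ℕ ℝ H} {η : ℕ → Ω → H} {b : ℕ → ℝ} {ξ : ℕ → ℕ → Ω → ℝ} {p : ℕ → ℝ → ℝ}
  {S : H → H}

theorem traj_sg (hSm : Measurable S) (hD : CondD P e η b ξ p) (u : H) (k : ℕ) :
    Measurable[sg ξ {jk | jk.2 ≤ k}] (traj S η (fun _ => u) k) := by
  induction k with
  | zero => exact measurable_const
  | succ k ih =>
    have h1 := ih.mono (sg_mono ξ (J := {jk | jk.2 ≤ k}) (J' := {jk | jk.2 ≤ k + 1})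
      (fun jk h => Nat.le_succ_of_le h)) le_rfl
    have h2 := (eta_sg hD (k + 1)).mono (sg_mono ξ (J := {jk | jk.2 = k + 1})
      (J' := {jk | jk.2 ≤ k + 1}) (fun jk h => le_of_eq h)) le_rfl
    exact (hSm.comp h1).add h2

theorem traj_meas (hSm : Measurable S) (hηmeas : ∀ k, Measurable (η k)) (u : H) (k : ℕ) :
    Measurable (traj S η (fun _ => u) k) := by
  induction k with
  | zero => exact measurable_const
  | succ k ih => exact (hSm.comp ih).add (hηmeas (k + 1))

theorem markov (hSm : Measurable S) (hηmeas : ∀ k, Measurable (η k)) (hD : CondD P e η b ξ p)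
    {w : H → ℝ≥0∞} (hw : Measurable w) (u : H) (k : ℕ) : ∀ F : H → ℝ≥0∞, Measurable F →
      ∫⁻ ω, (∏ n ∈ Finset.Icc 1 k, w (traj S η (fun _ => u) n ω)) *
        F (traj S η (fun _ => u) k ω) ∂P = (TT (Measure.map (η 1) P) S w)^[k] F u := by
  induction k with
  | zero => intro F hF; simp [traj]
  | succ k ih =>
    intro F hF
    have hprob : IsProbabilityMeasure (Measure.map (η 1) P) :=
      Measure.isProbabilityMeasure_map (hηmeas 1).aemeasurable
    rw [Function.iterate_succ_apply, ← ih _ (TT_meas hSm hw hF)]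
    let X : Ω → ℝ≥0∞ × H := fun ω => (∏ n ∈ Finset.Icc 1 k, w (traj S η (fun _ => u) n ω),
      traj S η (fun _ => u) k ω)
    have hX : Measurable[sg ξ {jk | jk.2 ≤ k}] X := by
      refine Measurable.prodMk (Finset.measurable_prod _ fun n hn => hw.comp ?_)
        (traj_sg hSm hD u k)
      exact (traj_sg hSm hD u n).mono (sg_mono ξ (fun jk h => le_trans h (Finset.mem_Icc.1 hn).2))
        le_rfl
    have hXm : Measurable X := by
      refine Measurable.prodMk (Finset.measurable_prod _ fun n hn => hw.comp ?_) ?_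
      · exact traj_meas hSm hηmeas u n
      · exact traj_meas hSm hηmeas u k
    have hind : IndepFun X (η (k + 1)) P := by
      refine sg_indep hD.2.2.2.1 hD.2.2.2.2.1 (J := {jk | jk.2 ≤ k}) (J' := {jk | jk.2 = k + 1})
        ?_ hX (eta_sg hD (k + 1))
      rw [Set.disjoint_left]; intro x hx hx'
      simp only [Set.mem_ofPred_eq] at hx hx'
      omega
    have hmap := (indepFun_iff_map_prod_eq_prod_map_map hXm.aemeasurable
      (hηmeas (k + 1)).aemeasurable).1 hind
    rw [eta_law hηmeas hD] at hmap
    have hpX : IsProbabilityMeasure (Measure.map X P) :=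
      Measure.isProbabilityMeasure_map hXm.aemeasurable
    have hg : Measurable (fun q : (ℝ≥0∞ × H) × H =>
        q.1.1 * (w (S q.1.2 + q.2) * F (S q.1.2 + q.2))) := by fun_prop
    have hg2 : Measurable (fun q : ℝ≥0∞ × H => q.1 * TT (Measure.map (η 1) P) S w F q.2) := by
      have := TT_meas (μ := Measure.map (η 1) P) hSm hw hF
      fun_prop
    calc ∫⁻ ω, (∏ n ∈ Finset.Icc 1 (k + 1), w (traj S η (fun _ => u) n ω)) *
          F (traj S η (fun _ => u) (k + 1) ω) ∂P
        = ∫⁻ ω, (fun q : (ℝ≥0∞ × H) × H =>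
          q.1.1 * (w (S q.1.2 + q.2) * F (S q.1.2 + q.2))) (X ω, η (k + 1) ω) ∂P := by
          congr 1; funext ω
          rw [Finset.prod_Icc_succ_top (by omega)]
          simp only [X, traj, mul_assoc]
      _ = ∫⁻ q, ∫⁻ x, q.1 * (w (S q.2 + x) * F (S q.2 + x)) ∂(Measure.map (η 1) P)
            ∂(Measure.map X P) := by
          rw [← lintegral_map hg (hXm.prodMk (hηmeas (k + 1))), hmap,
            lintegral_prod _ hg.aemeasurable]
      _ = ∫⁻ q, q.1 * TT (Measure.map (η 1) P) S w F q.2 ∂(Measure.map X P) := by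
          congr 1; funext q
          rw [lintegral_const_mul _ (by fun_prop)]
          rfl
      _ = _ := by
          rw [lintegral_map hg2 hXm]

theorem markov_real (hSm : Measurable S) (hηmeas : ∀ k, Measurable (η k))
    (hD : CondD P e η b ξ p) (V : H →ᵇ ℝ) (u : H) (k : ℕ) :
    ∫ ω, Real.exp (∑ n ∈ Finset.Icc 1 k, V (traj S η (fun _ => u) n ω)) ∂P =
      ((TT (Measure.map (η 1) P) S (fun x => ENNReal.ofReal (Real.exp (V x))))^[k]
        (fun _ => 1) u).toReal := by
  have hVm : Measurable V := V.continuous.measurable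
  have htm := traj_meas (η := η) hSm hηmeas u
  rw [integral_eq_lintegral_of_nonneg_ae (Eventually.of_forall fun ω => (Real.exp_pos _).le)
    (Measurable.aestronglyMeasurable (by fun_prop)),
    ← markov hSm hηmeas hD (by fun_prop) u k (fun _ => 1) measurable_const]
  congr 2; funext ω
  rw [mul_one, Real.exp_sum, ENNReal.ofReal_prod_of_nonneg (fun _ _ => (Real.exp_pos _).le)]

theorem traj_mem {K : Set H} (hηK : ∀ᵐ ω ∂P, ∀ k, η k ω ∈ K) {A : Set H}
    (hinv : ∀ u ∈ A, ∀ x ∈ K, S u + x ∈ A) {u : H} (hu : u ∈ A) :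
    ∀ᵐ ω ∂P, ∀ k, traj S η (fun _ => u) k ω ∈ A := by
  filter_upwards [hηK] with ω hω k
  induction k with
  | zero => exact hu
  | succ k ih => exact hinv _ ih _ (hω _)

end markov

theorem lim_abs {X : Type} {f : ℕ → X → ℝ} {A : Set X} (hA : A.Nonempty) {L : ℝ} {M : ℕ → ℝ}
    (hf : ∀ k : ℕ, ∀ u ∈ A, Real.exp (-(L * k)) ≤ f k u) (hfM : ∀ k, ∀ u ∈ A, f k u ≤ M k)
    (hM : ∀ k n, M (k + n) ≤ M k * M n)
    (hH : ∀ ε : ℝ, 0 < ε → ∃ c : ℝ, 0 < c ∧ ∀ k : ℕ, ∀ u ∈ A,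
      c * M k ≤ Real.exp (ε * k) * f k u) :
    ∃ l : ℝ, TendstoUniformlyOn (fun (k : ℕ) u => (k : ℝ)⁻¹ * Real.log (f k u)) (fun _ => l)
      atTop A := by
  obtain ⟨u₀, hu₀⟩ := hA
  have hfpos : ∀ k, ∀ u ∈ A, 0 < f k u := fun k u hu => (Real.exp_pos _).trans_le (hf k u hu)
  have hMpos : ∀ k, 0 < M k := fun k => (hfpos k _ hu₀).trans_le (hfM k _ hu₀)
  have hsub : Subadditive fun k => Real.log (M k) := by
    intro m n
    rw [← Real.log_mul (hMpos m).ne' (hMpos n).ne']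
    exact Real.log_le_log (hMpos _) (hM m n)
  have hbdd : BddBelow (Set.range fun n : ℕ => Real.log (M n) / n) := by
    refine ⟨-|L|, ?_⟩
    rintro _ ⟨n, rfl⟩
    rcases Nat.eq_zero_or_pos n with rfl | hn
    · simp
    · have hn' : (0 : ℝ) < n := by exact_mod_cast hn
      simp only
      rw [le_div_iff₀ hn']
      have := Real.log_le_log (Real.exp_pos _) ((hf n u₀ hu₀).trans (hfM n u₀ hu₀))
      rw [Real.log_exp] at this
      nlinarith [le_abs_self L]
  have hlim := hsub.tendsto_lim hbdd
  refine ⟨hsub.lim, ?_⟩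
  rw [Metric.tendstoUniformlyOn_iff]
  intro ε hε
  obtain ⟨c, hc, hcc⟩ := hH (ε / 4) (by positivity)
  have h1 : ∀ᶠ n : ℕ in atTop, |Real.log (M n) / n - hsub.lim| < ε / 4 := by
    have := Metric.tendsto_nhds.1 hlim (ε / 4) (by positivity)
    simpa [Real.dist_eq] using this
  have h2 : ∀ᶠ n : ℕ in atTop, |Real.log c| / n < ε / 4 :=
    (tendsto_order.1 (tendsto_const_div_atTop_nhds_zero_nat _)).2 _ (by positivity)
  filter_upwards [h1, h2, eventually_gt_atTop 0] with n h1 h2 hn u hu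
  have hn' : (0 : ℝ) < n := by exact_mod_cast hn
  have h3 : Real.log (f n u) ≤ Real.log (M n) := Real.log_le_log (hfpos n u hu) (hfM n u hu)
  have h4 : Real.log c + Real.log (M n) ≤ ε / 4 * n + Real.log (f n u) := by
    have := Real.log_le_log (mul_pos hc (hMpos n)) (hcc n u hu)
    rwa [Real.log_mul hc.ne' (hMpos n).ne', Real.log_mul (Real.exp_pos _).ne' (hfpos n u hu).ne',
      Real.log_exp] at this
  rw [Real.dist_eq, inv_mul_eq_div, abs_sub_comm]
  rw [abs_lt] at h1
  have h5 : Real.log (f n u) / n ≤ Real.log (M n) / n := by gcongr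
  have h6 : Real.log (M n) / n - |Real.log c| / n - ε / 4 ≤ Real.log (f n u) / n := by
    rw [← sub_div, sub_le_iff_le_add, div_le_iff₀ hn', add_mul, div_mul_cancel₀ _ hn'.ne']
    linarith [neg_abs_le (Real.log c)]
  rw [abs_lt]
  constructor <;> linarith [h1.1, h1.2]

section final

variable {Ω : Type} [MeasurableSpace Ω] {P : Measure Ω} [IsProbabilityMeasure P]
variable [SecondCountableTopology H] [MeasurableSpace H] [BorelSpace H]
  {e : HilbertBasis ℕ ℝ H} {η : ℕ → Ω → H} {b : ℕ → ℝ} {ξ : ℕ → ℕ → Ω → ℝ} {p : ℕ → ℝ → ℝ}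
  {S : H → H}

theorem msupp_null (μ : Measure H) : μ (msupp μ)ᶜ = 0 := by
  have : msupp μ = μ.support := by
    ext x
    rw [Measure.mem_support_iff_forall]
    rfl
  rw [this]
  exact Measure.measure_compl_support

theorem exists_lim (hηmeas : ∀ k, Measurable (η k))
    (K : Set H) (hK : K = msupp (Measure.map (η 1) P)) (hKcomp : IsCompact K)
    (hA : CondA S) (hB : CondB S K) (hC : CondC S e) (hD : CondD P e η b ξ p)
    (hb : ∀ j, b j ≠ 0) (V : H →ᵇ ℝ) : ∃ l : ℝ,
        TendstoUniformlyOn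
          (fun (k : ℕ) (u : H) => (k : ℝ)⁻¹ *
            Real.log (∫ ω,
              Real.exp (∑ n ∈ Finset.Icc 1 k, V (traj S η (fun _ => u) n ω)) ∂P))
          (fun _ => l) atTop (attainDom S K ({0} : Set H)) := by
  have hSc : Continuous S := hA.1.continuous
  have hSm : Measurable S := hSc.measurable
  simp only [markov_real hSm hηmeas hD V]
  set μ := Measure.map (η 1) P with hμ
  have hprob : IsProbabilityMeasure μ := Measure.isProbabilityMeasure_map (hηmeas 1).aemeasurable
  set w : H → ℝ≥0∞ := fun x => ENNReal.ofReal (Real.exp (V x)) with hw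
  have hVm : Measurable V := V.continuous.measurable
  have hwm : Measurable w := by fun_prop
  set A := attainDom S K ({0} : Set H) with hAdef
  have hK0 : μ Kᶜ = 0 := by rw [hK]; exact msupp_null μ
  have hKm : MeasurableSet K := hKcomp.isClosed.measurableSet
  have hKpos : ∀ x ∈ K, ∀ r > 0, μ (Metric.ball x r) ≠ 0 := by
    intro x hx r hr
    rw [hK] at hx
    exact (hx _ (Metric.ball_mem_nhds x hr)).ne'
  have h0' : ∀ r > 0, μ (Metric.ball 0 r) ≠ 0 := fun r hr => zero_ball hηmeas hD r hr
  have h0 : (0 : H) ∈ K := by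
    rw [hK]
    intro U hU
    obtain ⟨r, hr, hrU⟩ := Metric.mem_nhds_iff.1 hU
    exact (pos_iff_ne_zero.2 (h0' r hr)).trans_le (measure_mono hrU)
  have hinv : ∀ u ∈ A, ∀ x ∈ K, S u + x ∈ A := attainDom_inv hSc
  have hAc : IsCompact A := attainDom_compact hKcomp e hC hA hB
  have hAne : A.Nonempty := ⟨0, zero_mem_attainDom⟩
  obtain ⟨R, hR, hAR⟩ := attainDom_bdd hSc hKcomp hB
  obtain ⟨CS, hCS, -, -, -, -, -, hLip, -⟩ := hA.2 R (R / 2) (by positivity) (by linarith)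
  have hLipA : ∀ v ∈ A, ∀ v' ∈ A, ‖S v - S v'‖ ≤ CS * ‖v - v'‖ := fun v hv v' hv' =>
    hLip v (hAR hv) v' (hAR hv')
  have hSu : ∀ ε > 0, ∃ δ > 0, ∀ v ∈ A, ∀ v' ∈ A, ‖v - v'‖ < δ → ‖S v - S v'‖ < ε := by
    intro ε hε
    refine ⟨ε / CS, by positivity, fun v hv v' hv' h => (hLipA v hv v' hv').trans_lt ?_⟩
    rw [lt_div_iff₀ hCS] at h
    linarith
  set E : ℝ≥0 := ⟨Real.exp ‖V‖, (Real.exp_pos _).le⟩ with hE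
  have hEr : (E : ℝ≥0∞) = ENNReal.ofReal (Real.exp ‖V‖) := by
    rw [← ENNReal.ofReal_coe_nnreal]; rfl
  have E1 : 1 ≤ E := by
    rw [← NNReal.coe_le_coe]; exact Real.one_le_exp (norm_nonneg _)
  have hVn : ∀ x, |V x| ≤ ‖V‖ := fun x => V.norm_coe_le_norm x
  have hwE : ∀ x, w x ≤ E := by
    intro x
    rw [hEr]
    exact ENNReal.ofReal_le_ofReal (Real.exp_le_exp.2 ((le_abs_self _).trans (hVn x)))
  have hEinv : (E : ℝ≥0∞)⁻¹ = ENNReal.ofReal (Real.exp (-‖V‖)) := by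
    rw [hEr, Real.exp_neg, ENNReal.ofReal_inv_of_pos (Real.exp_pos _)]
  have hwE' : ∀ x, (E : ℝ≥0∞)⁻¹ ≤ w x := by
    intro x
    rw [hEinv]
    exact ENNReal.ofReal_le_ofReal (Real.exp_le_exp.2 (by linarith [neg_abs_le (V x), hVn x]))
  have hEi0 : (E : ℝ≥0∞)⁻¹ ≠ 0 := by simp
  have hr0 : Reach μ S w A 0 :=
    reach_zero hK0 hinv hEi0 hwE' hSu h0 h0' (fun r hr => contraction hA hR hAR r hr)
  have hY : ∀ y ∈ ⋃ n, attain S K {0} n, Reach μ S w A y := by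
    intro y hy
    obtain ⟨n, hn⟩ := Set.mem_iUnion.1 hy
    exact reach_attain hSc hK0 hinv hEi0 hwE' hKpos hr0 n y hn
  set f : ℕ → H → ℝ≥0∞ := fun k => (TT μ S w)^[k] (fun _ => 1) with hf
  set M : ℕ → ℝ≥0∞ := fun k => ⨆ v ∈ A, f k v with hM
  have hfM : ∀ k, ∀ v ∈ A, f k v ≤ M k := fun k v hv =>
    le_iSup₂ (f := fun v (_ : v ∈ A) => f k v) v hv
  have hMtop : ∀ k, M k ≠ ⊤ := by
    intro k
    refine ne_top_of_le_ne_top (b := (E : ℝ≥0∞) ^ k) (by simp) ?_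
    exact iSup₂_le fun v hv => TT_iter_one_le hK0 hinv hwE k v hv
  have hftop : ∀ k, ∀ v ∈ A, f k v ≠ ⊤ := fun k v hv => ne_top_of_le_ne_top (hMtop k) (hfM k v hv)
  refine lim_abs (f := fun k u => (f k u).toReal) (A := A) hAne (L := ‖V‖)
    (M := fun k => (M k).toReal) ?_ ?_ ?_ ?_
  · intro k u hu
    have h1 := TT_iter_one_ge hK0 hinv hwE' k u hu
    rw [hEinv, ← ENNReal.ofReal_pow (Real.exp_pos _).le, ← Real.exp_nat_mul] at h1
    have h2 := (ENNReal.ofReal_le_iff_le_toReal (hftop k u hu)).1 h1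
    refine le_trans (le_of_eq ?_) h2
    congr 1; ring
  · intro k u hu
    exact ENNReal.toReal_mono (hMtop k) (hfM k u hu)
  · intro k n
    rw [← ENNReal.toReal_mul]
    refine ENNReal.toReal_mono (ENNReal.mul_ne_top (hMtop k) (hMtop n)) ?_
    refine iSup₂_le fun v hv => (TT_add_le hK0 hinv k n (hMtop n) (hfM n) v hv).trans ?_
    rw [mul_comm]
    exact mul_le_mul' (hfM k v hv) le_rfl
  · intro ε hε
    set q : ℝ≥0 := ⟨Real.exp ε, (Real.exp_pos _).le⟩ with hq
    have hqr : (q : ℝ≥0∞) = ENNReal.ofReal (Real.exp ε) := by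
      rw [← ENNReal.ofReal_coe_nnreal]; rfl
    have q1 : 1 ≤ q := by
      rw [← NNReal.coe_le_coe]; exact Real.one_le_exp hε.le
    -- modulus of continuity
    obtain ⟨δ₀, hδ₀, hmod₀⟩ := Metric.uniformContinuousOn_iff.1
      (hAc.uniformContinuousOn_of_continuous V.continuous.continuousOn) ε hε
    have hmod : ∀ v ∈ A, ∀ v' ∈ A, ‖v - v'‖ ≤ δ₀ / 2 → w v ≤ q * w v' := by
      intro v hv v' hv' h
      have h1 := hmod₀ v hv v' hv' (by rw [dist_eq_norm]; linarith)
      rw [Real.dist_eq] at h1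
      rw [hqr, hw]
      simp only
      rw [← ENNReal.ofReal_mul (Real.exp_pos _).le, ← Real.exp_add]
      exact ENNReal.ofReal_le_ofReal (Real.exp_le_exp.2 (by linarith [(abs_lt.1 h1).2]))
    obtain ⟨γ, hγ0, -, hγlim, hγ⟩ := hC R hR
    have hqE : (0 : ℝ) < q * E ^ 2 := by
      have h1 : (0 : ℝ) < q := Real.exp_pos _
      have h2 : (0 : ℝ) < E := Real.exp_pos _
      positivity
    obtain ⟨N, hN⟩ := ((tendsto_order.1 hγlim).2 (1 / 2 / (q * E ^ 2)) (by positivity)).exists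
    obtain ⟨D, hDD⟩ := shift_proj hηmeas hD hb N
    have hfel := feller (μ := μ) (S := S) (w := w) (A := A) (K := K) hSm hwm hK0 hKm hinv
      (E := E) (q := q) (D := D * Real.toNNReal CS) hwE hwE' E1 q1 (δ := δ₀ / 2) (g := γ N)
      (by positivity) (hγ0 N).le
      (by rw [lt_div_iff₀ hqE] at hN; linarith) hmod (projB e N)
      (fun u hu u' hu' => hγ N u (hAR hu) u' (hAR hu'))
      (fun u hu u' hu' c hc Φ hΦ hΦc => by
        refine (hDD (S u - S u') c Φ hΦ hΦc).trans (add_le_add le_rfl (mul_le_mul' le_rfl ?_))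
        push_cast
        rw [mul_assoc]
        refine mul_le_mul' le_rfl ?_
        rw [ENNReal.ofNNReal_toNNReal, ← ENNReal.ofReal_mul hCS.le]
        exact ENNReal.ofReal_le_ofReal (hLipA u hu u' hu'))
    obtain ⟨c, hc0, hc⟩ := harnack hK0 hinv E1 hwE hwE' hAc hAne (Y := ⋃ n, attain S K {0} n)
      subset_rfl hY (by positivity) hfel
    have hmt : min c 1 ≠ ⊤ := ne_top_of_le_ne_top ENNReal.one_ne_top (min_le_right _ _)
    refine ⟨(min c 1).toReal, ENNReal.toReal_pos ?_ hmt, fun k u hu => ?_⟩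
    · exact (lt_min (pos_iff_ne_zero.2 hc0) one_pos).ne'
    · have h1 : min c 1 * M k ≤ (q : ℝ≥0∞) ^ k * f k u :=
        (mul_le_mul' (min_le_left _ _) le_rfl).trans (hc k u hu)
      have h2 := ENNReal.toReal_mono (ENNReal.mul_ne_top (by simp) (hftop k u hu)) h1
      rw [ENNReal.toReal_mul, ENNReal.toReal_mul, ENNReal.toReal_pow] at h2
      refine h2.trans (le_of_eq ?_)
      congr 1
      rw [mul_comm, Real.exp_nat_mul]
      rfl

theorem log_int_convex {X Y : Ω → ℝ} (hX : Integrable (fun ω => Real.exp (X ω)) P)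
    (hY : Integrable (fun ω => Real.exp (Y ω)) P) {s t : ℝ} (hs : 0 ≤ s) (ht : 0 ≤ t)
    (hst : s + t = 1) (hXY : Integrable (fun ω => Real.exp (s * X ω + t * Y ω)) P) :
    Real.log (∫ ω, Real.exp (s * X ω + t * Y ω) ∂P) ≤
      s * Real.log (∫ ω, Real.exp (X ω) ∂P) + t * Real.log (∫ ω, Real.exp (Y ω) ∂P) := by
  have pX := integral_exp_pos hX
  have pY := integral_exp_pos hY
  have pXY := integral_exp_pos hXY
  set α := Real.log (∫ ω, Real.exp (X ω) ∂P) with hα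
  set β := Real.log (∫ ω, Real.exp (Y ω) ∂P) with hβ
  have eα : Real.exp α = ∫ ω, Real.exp (X ω) ∂P := Real.exp_log pX
  have eβ : Real.exp β = ∫ ω, Real.exp (Y ω) ∂P := Real.exp_log pY
  rw [Real.log_le_iff_le_exp pXY]
  have h1 : ∀ ω, Real.exp (s * X ω + t * Y ω) ≤ Real.exp (s * α + t * β) *
      (s * (Real.exp (X ω) * Real.exp (-α)) + t * (Real.exp (Y ω) * Real.exp (-β))) := by
    intro ω
    have h2 := convexOn_exp.2 (Set.mem_univ (X ω - α)) (Set.mem_univ (Y ω - β)) hs ht hst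
    simp only [smul_eq_mul] at h2
    rw [← Real.exp_add, ← Real.exp_add, ← sub_eq_add_neg, ← sub_eq_add_neg]
    refine le_trans (le_of_eq ?_) (mul_le_mul_of_nonneg_left h2 (Real.exp_pos _).le)
    rw [← Real.exp_add]
    congr 1; ring
  have i1 : Integrable (fun ω => s * (Real.exp (X ω) * Real.exp (-α))) P :=
    (hX.mul_const _).const_mul _
  have i2 : Integrable (fun ω => t * (Real.exp (Y ω) * Real.exp (-β))) P :=
    (hY.mul_const _).const_mul _
  refine (integral_mono hXY ((i1.add i2).const_mul _) h1).trans (le_of_eq ?_)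
  rw [integral_const_mul]
  have h3 : ∫ ω, (s * (Real.exp (X ω) * Real.exp (-α)) + t * (Real.exp (Y ω) * Real.exp (-β))) ∂P
      = 1 := by
    rw [integral_add i1 i2, integral_const_mul, integral_const_mul, integral_mul_const,
      integral_mul_const, ← eα, ← eβ, ← Real.exp_add, ← Real.exp_add]
    simp [hst]
  have h4 : ∀ ω, ((fun ω => s * (Real.exp (X ω) * Real.exp (-α))) +
      fun ω => t * (Real.exp (Y ω) * Real.exp (-β))) ω =
      s * (Real.exp (X ω) * Real.exp (-α)) + t * (Real.exp (Y ω) * Real.exp (-β)) := fun ω => rfl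
  simp only [h4, h3, mul_one]

theorem int_exp_sum (hSm : Measurable S) (hηmeas : ∀ k, Measurable (η k)) (V : H →ᵇ ℝ) (u : H)
    (k : ℕ) : Integrable
      (fun ω => Real.exp (∑ n ∈ Finset.Icc 1 k, V (traj S η (fun _ => u) n ω))) P := by
  have hVm : Measurable V := V.continuous.measurable
  have htm := traj_meas (η := η) hSm hηmeas u
  refine Integrable.of_bound (C := Real.exp (k * ‖V‖))
    (Measurable.aestronglyMeasurable (by fun_prop)) (Eventually.of_forall fun ω => ?_)
  rw [Real.norm_eq_abs, Real.abs_exp, Real.exp_le_exp]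
  refine (Finset.sum_le_card_nsmul _ _ ‖V‖ fun n _ =>
    (le_abs_self _).trans (V.norm_coe_le_norm _)).trans (le_of_eq ?_)
  simp

theorem log_int_lip (hSm : Measurable S) (hηmeas : ∀ k, Measurable (η k)) {A : Set H}
    {u : H} (hu : ∀ᵐ ω ∂P, ∀ k, traj S η (fun _ => u) k ω ∈ A) (V₁ V₂ : H →ᵇ ℝ) {d : ℝ}
    (hd : ∀ x ∈ A, V₁ x - V₂ x ≤ d) (k : ℕ) :
    Real.log (∫ ω, Real.exp (∑ n ∈ Finset.Icc 1 k, V₁ (traj S η (fun _ => u) n ω)) ∂P) ≤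
    k * d + Real.log (∫ ω, Real.exp (∑ n ∈ Finset.Icc 1 k, V₂ (traj S η (fun _ => u) n ω)) ∂P) := by
  have i1 := int_exp_sum (P := P) hSm hηmeas V₁ u k
  have i2 := int_exp_sum (P := P) hSm hηmeas V₂ u k
  have p1 := integral_exp_pos i1
  have p2 := integral_exp_pos i2
  rw [Real.log_le_iff_le_exp p1, Real.exp_add, Real.exp_log p2, ← integral_const_mul]
  refine integral_mono_ae i1 (i2.const_mul _) ?_
  filter_upwards [hu] with ω hω
  rw [← Real.exp_add, Real.exp_le_exp, ← sub_le_iff_le_add, ← Finset.sum_sub_distrib]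
  refine (Finset.sum_le_card_nsmul _ _ d fun n _ => hd _ (hω n)).trans (le_of_eq ?_)
  simp

end final

/-- **Existence of the limit `Q(V)` (Property 1, Section 4)**: under Conditions (A)–(D) with
`b_j ≠ 0`, for every `V ∈ C(𝒜)` the limit
`Q(V) = lim_k k⁻¹ log 𝔼_u exp(∑_{n=1}^k V(u_n))` exists uniformly with respect to the
deterministic initial condition `u ∈ 𝒜` and does not depend on `u`; the resulting functional
`Q` is convex, `1`-Lipschitz for the sup-norm over `𝒜`, and satisfies `Q(C) = C` on
constants. -/
theorem statement1
    {H : Type} [NormedAddCommGroup H] [InnerProductSpace ℝ H] [CompleteSpace H]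
    [SecondCountableTopology H] [MeasurableSpace H] [BorelSpace H]
    {Ω : Type} [MeasurableSpace Ω] (P : Measure Ω) [IsProbabilityMeasure P]
    (S : H → H) (e : HilbertBasis ℕ ℝ H)
    (η : ℕ → Ω → H) (hηmeas : ∀ k, Measurable (η k))
    (b : ℕ → ℝ) (ξ : ℕ → ℕ → Ω → ℝ) (p : ℕ → ℝ → ℝ)
    (K : Set H) (hK : K = msupp (Measure.map (η 1) P)) (hKcomp : IsCompact K)
    (hA : CondA S) (hB : CondB S K) (hC : CondC S e) (hD : CondD P e η b ξ p)
    (hb : ∀ j, b j ≠ 0) :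
    ∃ Q : (H →ᵇ ℝ) → ℝ,
      -- the limit exists uniformly in the initial condition `u ∈ 𝒜` and is independent of `u`
      (∀ V : H →ᵇ ℝ,
        TendstoUniformlyOn
          (fun (k : ℕ) (u : H) => (k : ℝ)⁻¹ *
            Real.log (∫ ω,
              Real.exp (∑ n ∈ Finset.Icc 1 k, V (traj S η (fun _ => u) n ω)) ∂P))
          (fun _ => Q V) atTop (attainDom S K ({0} : Set H))) ∧
      ConvexOn ℝ Set.univ Q ∧
      (∀ V₁ V₂ : H →ᵇ ℝ,
        |Q V₁ - Q V₂| ≤ ⨆ x : attainDom S K ({0} : Set H), |V₁ (x : H) - V₂ (x : H)|) ∧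
      (∀ c : ℝ, Q (BoundedContinuousFunction.const H c) = c) := by
  have hSc : Continuous S := hA.1.continuous
  have hSm : Measurable S := hSc.measurable
  choose Q hQ using fun V => exists_lim hηmeas K hK hKcomp hA hB hC hD hb V
  have h0A : (0 : H) ∈ attainDom S K ({0} : Set H) := zero_mem_attainDom
  have hQ0 : ∀ V, Tendsto (fun k : ℕ => (k : ℝ)⁻¹ * Real.log (∫ ω,
      Real.exp (∑ n ∈ Finset.Icc 1 k, V (traj S η (fun _ => (0 : H)) n ω)) ∂P)) atTop
      (𝓝 (Q V)) := fun V => (hQ V).tendsto_at h0A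
  have hηK : ∀ᵐ ω ∂P, ∀ k, η k ω ∈ K := by
    rw [ae_all_iff]
    intro k
    refine ae_of_ae_map (hηmeas k).aemeasurable (p := fun x => x ∈ K) ?_
    rw [eta_law hηmeas hD k]
    have : (Measure.map (η 1) P) Kᶜ = 0 := by rw [hK]; exact msupp_null _
    exact this
  have htr := traj_mem hηK (attainDom_inv (K := K) (B := {0}) hSc) h0A
  refine ⟨Q, hQ, ⟨convex_univ, ?_⟩, ?_, ?_⟩
  · intro V₁ _ V₂ _ s t hs ht hst
    refine le_of_tendsto_of_tendsto' (hQ0 _) (((hQ0 V₁).const_mul s).add ((hQ0 V₂).const_mul t))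
      fun k => ?_
    have heq : ∀ ω, ∑ n ∈ Finset.Icc 1 k, (s • V₁ + t • V₂) (traj S η (fun _ => (0 : H)) n ω) =
        s * ∑ n ∈ Finset.Icc 1 k, V₁ (traj S η (fun _ => (0 : H)) n ω) +
        t * ∑ n ∈ Finset.Icc 1 k, V₂ (traj S η (fun _ => (0 : H)) n ω) := by
      intro ω
      rw [Finset.mul_sum, Finset.mul_sum, ← Finset.sum_add_distrib]
      rfl
    have h3 := int_exp_sum (P := P) hSm hηmeas (s • V₁ + t • V₂) 0 k
    simp only [heq] at h3 ⊢
    have := log_int_convex (int_exp_sum (P := P) hSm hηmeas V₁ 0 k)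
      (int_exp_sum (P := P) hSm hηmeas V₂ 0 k) hs ht hst h3
    refine (mul_le_mul_of_nonneg_left this (by positivity)).trans (le_of_eq ?_)
    ring
  · have key : ∀ V₁ V₂ : H →ᵇ ℝ, Q V₁ - Q V₂ ≤
        ⨆ x : attainDom S K ({0} : Set H), |V₁ (x : H) - V₂ (x : H)| := by
      intro V₁ V₂
      set d := ⨆ x : attainDom S K ({0} : Set H), |V₁ (x : H) - V₂ (x : H)| with hd
      have hbd : BddAbove (Set.range fun x : attainDom S K ({0} : Set H) =>
          |V₁ (x : H) - V₂ (x : H)|) := by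
        refine ⟨‖V₁ - V₂‖, ?_⟩
        rintro _ ⟨x, rfl⟩
        exact (V₁ - V₂).norm_coe_le_norm x
      have hle : ∀ x ∈ attainDom S K ({0} : Set H), V₁ x - V₂ x ≤ d := fun x hx =>
        (le_abs_self _).trans (le_ciSup hbd ⟨x, hx⟩)
      rw [sub_le_iff_le_add]
      refine le_of_tendsto_of_tendsto (hQ0 V₁) ((tendsto_const_nhds (x := d)).add (hQ0 V₂)) ?_
      filter_upwards [eventually_gt_atTop 0] with k hk
      have hk' : (0 : ℝ) < k := by exact_mod_cast hk
      have := log_int_lip hSm hηmeas htr V₁ V₂ hle k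
      refine (mul_le_mul_of_nonneg_left this (by positivity)).trans (le_of_eq ?_)
      rw [mul_add, inv_mul_cancel_left₀ hk'.ne']
    intro V₁ V₂
    rw [abs_le]
    refine ⟨?_, key V₁ V₂⟩
    have h := key V₂ V₁
    simp only [abs_sub_comm (V₂ _)] at h
    linarith
  · intro c
    refine tendsto_nhds_unique (hQ0 (BoundedContinuousFunction.const H c))
      (tendsto_const_nhds.congr' ?_)
    filter_upwards [eventually_gt_atTop 0] with k hk
    have hk' : (k : ℝ) ≠ 0 := by exact_mod_cast hk.ne'
    simp [hk']
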